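/- Let 0<α<1. Then there exists a constant c_α, depending only on α (and on sup_n m_n), such that for every martingale f ∈ H_{1/(1+α)}(G_m) and every n ≥ 2, (1/log n) Σ_{k=1}^{n} ‖σ_k^α f‖_{1/(1+α)}^{1/(1+α)} / k ≤ c_α ‖f‖_{H_{1/(1+α)}}^{1/(1+α)}, where σ_k^α denotes the k-th (C,α) Cesàro mean of the Vilenkin-Fourier series. -/

import Mathlib

open MeasureTheory Filter Finset Asymptotics
open scoped ENNReal NNReal

noncomputable section

namespace Vilenkin

/-- The Vilenkin group `G_m`: the complete direct product of the cyclic groups `Z_{m_n}`. -/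
abbrev G (m : ℕ → ℕ) := ∀ n, ZMod (m n)

/-- The generalized number system `M_0 = 1`, `M_{n+1} = m_n M_n`. -/
def MM (m : ℕ → ℕ) : ℕ → ℕ
  | 0 => 1
  | n + 1 => m n * MM m n

/-- The generalized Rademacher functions `r_k(x) = exp(2 π i x_k / m_k)`. -/
def rade (m : ℕ → ℕ) (k : ℕ) (x : G m) : ℂ :=
  Complex.exp (2 * Real.pi * Complex.I * ((x k).val : ℂ) / (m k : ℂ))

/-- The Vilenkin system `ψ_n = ∏_k r_k^{n_k}`, where `n = ∑_k n_k M_k` is the expansion of `n`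
in the generalized number system (the digits `n_k = (n / M_k) mod m_k` vanish for `k > n`). -/
def psi (m : ℕ → ℕ) (n : ℕ) (x : G m) : ℂ :=
  ∏ k ∈ Finset.range (n + 1), rade m k x ^ (n / MM m k % m k)

/-- The Dirichlet kernels `D_n = ∑_{k=0}^{n-1} ψ_k`. -/
def D (m : ℕ → ℕ) (n : ℕ) (x : G m) : ℂ := ∑ k ∈ Finset.range n, psi m k x

/-- The Fejér kernels `K_n = (1/n) ∑_{k=1}^{n} D_k`. -/
def K (m : ℕ → ℕ) (n : ℕ) (x : G m) : ℂ := (n : ℂ)⁻¹ * ∑ k ∈ Finset.Icc 1 n, D m k x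

/-- `Q_n = ∑_{k=0}^{n-1} q_k`. -/
def Q (q : ℕ → ℝ) (n : ℕ) : ℝ := ∑ k ∈ Finset.range n, q k

/-- The Nörlund kernels `F_n = (1/Q_n) ∑_{k=1}^{n} q_{n-k} D_k`. -/
def F (m : ℕ → ℕ) (q : ℕ → ℝ) (n : ℕ) (x : G m) : ℂ :=
  ((Q q n : ℝ) : ℂ)⁻¹ * ∑ k ∈ Finset.Icc 1 n, (q (n - k) : ℂ) * D m k x

/-- The interval (cylinder) `I_n(x) = {y : y_j = x_j for all j < n}`. -/
def cyl (m : ℕ → ℕ) (n : ℕ) (x : G m) : Set (G m) := {y | ∀ j < n, y j = x j}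

/-- The element `s_k e_k` of `G_m` (value `s_k` in coordinate `k`, zero elsewhere). -/
def oneSpike (m : ℕ → ℕ) (k sk : ℕ) : G m := fun j => if j = k then (sk : ZMod (m j)) else 0

/-- The element `s_k e_k + s_l e_l` of `G_m` (for `k ≠ l`). -/
def twoSpike (m : ℕ → ℕ) (k sk l sl : ℕ) : G m :=
  fun j => if j = k then (sk : ZMod (m j)) else if j = l then (sl : ZMod (m j)) else 0

/-- The σ-algebra `𝔉_n` generated by the intervals `I_n(x)`, i.e. by the first `n`
coordinates. -/
def filt (m : ℕ → ℕ) (n : ℕ) : MeasurableSpace (G m) :=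
  MeasurableSpace.comap (fun x (i : Fin n) => x i.val) inferInstance

/-- `f = (f^{(n)})` is a martingale with respect to the filtration `(𝔉_n)` and the measure `μ`. -/
def IsMartingale (m : ℕ → ℕ) (μ : Measure (G m)) (f : ℕ → G m → ℂ) : Prop :=
  (∀ n, Integrable (f n) μ) ∧ (∀ n, Measurable[filt m n] (f n)) ∧
    ∀ n, ∀ s : Set (G m), MeasurableSet[filt m n] s →
      ∫ x in s, f (n + 1) x ∂μ = ∫ x in s, f n x ∂μ

/-- The `L_p`-quasinorm `(∫ g^p dμ)^{1/p}` of a nonnegative (extended-real-valued) function. -/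
def lpNormE (m : ℕ → ℕ) (μ : Measure (G m)) (p : ℝ) (g : G m → ℝ≥0∞) : ℝ≥0∞ :=
  (∫⁻ x, g x ^ p ∂μ) ^ (1 / p)

/-- The martingale Hardy space quasinorm `‖f‖_{H_p} = ‖sup_n |f^{(n)}|‖_p`. -/
def HpNorm (m : ℕ → ℕ) (μ : Measure (G m)) (p : ℝ) (f : ℕ → G m → ℂ) : ℝ≥0∞ :=
  lpNormE m μ p (fun x => ⨆ n, (‖f n x‖₊ : ℝ≥0∞))

/-- The Vilenkin-Fourier coefficients of a martingale:
`f̂(i) = lim_k ∫ f^{(k)} conj ψ_i dμ`. -/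
def mcoef (m : ℕ → ℕ) (μ : Measure (G m)) (f : ℕ → G m → ℂ) (i : ℕ) : ℂ :=
  limUnder atTop fun k => ∫ x, f k x * (starRingEnd ℂ) (psi m i x) ∂μ

/-- The partial sums `S_n f = ∑_{k=0}^{n-1} f̂(k) ψ_k` of the Vilenkin-Fourier series of a
martingale. -/
def mS (m : ℕ → ℕ) (μ : Measure (G m)) (f : ℕ → G m → ℂ) (n : ℕ) (x : G m) : ℂ :=
  ∑ k ∈ Finset.range n, mcoef m μ f k * psi m k x

/-- The Nörlund means `t_n f = (1/Q_n) ∑_{k=1}^{n} q_{n-k} S_k f` of a martingale. -/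
def mT (m : ℕ → ℕ) (q : ℕ → ℝ) (μ : Measure (G m)) (f : ℕ → G m → ℂ) (n : ℕ) (x : G m) : ℂ :=
  ((Q q n : ℝ) : ℂ)⁻¹ * ∑ k ∈ Finset.Icc 1 n, (q (n - k) : ℂ) * mS m μ f k x

/-- The Cesàro numbers `A_0^α = 0`, `A_n^α = (α+1)⋯(α+n)/n!`. -/
def AC (α : ℝ) (n : ℕ) : ℝ :=
  if n = 0 then 0 else (∏ j ∈ Finset.Icc 1 n, (α + (j : ℝ))) / (n.factorial : ℝ)

/-- The `(C,α)` (Cesàro) means `σ_n^α f = (1/A_n^α) ∑_{k=1}^{n} A_{n-k}^{α-1} S_k f` of a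
martingale. -/
def mCes (m : ℕ → ℕ) (α : ℝ) (μ : Measure (G m)) (f : ℕ → G m → ℂ) (n : ℕ) (x : G m) : ℂ :=
  ((AC α n : ℝ) : ℂ)⁻¹ * ∑ k ∈ Finset.Icc 1 n, ((AC (α - 1) (n - k) : ℝ) : ℂ) * mS m μ f k x

/-- The Fejér means `σ_n f = (1/n) ∑_{k=1}^{n} S_k f` of a martingale. -/
def mFej (m : ℕ → ℕ) (μ : Measure (G m)) (f : ℕ → G m → ℂ) (n : ℕ) (x : G m) : ℂ :=
  (n : ℂ)⁻¹ * ∑ k ∈ Finset.Icc 1 n, mS m μ f k x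

/-- The Vilenkin-Fourier coefficients of an integrable function. -/
def fcoef (m : ℕ → ℕ) (μ : Measure (G m)) (g : G m → ℂ) (i : ℕ) : ℂ :=
  ∫ x, g x * (starRingEnd ℂ) (psi m i x) ∂μ

/-- The partial sums of the Vilenkin-Fourier series of an integrable function. -/
def fS (m : ℕ → ℕ) (μ : Measure (G m)) (g : G m → ℂ) (n : ℕ) (x : G m) : ℂ :=
  ∑ k ∈ Finset.range n, fcoef m μ g k * psi m k x

/-- The Nörlund means of an integrable function. -/
def fT (m : ℕ → ℕ) (q : ℕ → ℝ) (μ : Measure (G m)) (g : G m → ℂ) (n : ℕ) (x : G m) : ℂ :=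
  ((Q q n : ℝ) : ℂ)⁻¹ * ∑ k ∈ Finset.Icc 1 n, (q (n - k) : ℂ) * fS m μ g k x


section kernelAlg

variable {m : ℕ → ℕ}

lemma MM_pos (hm : ∀ n, 2 ≤ m n) (n : ℕ) : 0 < MM m n := by
  induction n with
  | zero => simp [MM]
  | succ n ih =>
    have := hm n
    simp only [MM]
    positivity

lemma MM_succ_ge (hm : ∀ n, 2 ≤ m n) (n : ℕ) : 2 * MM m n ≤ MM m (n + 1) := by
  simp only [MM]
  exact Nat.mul_le_mul_right _ (hm n)

lemma MM_mono (hm : ∀ n, 2 ≤ m n) : Monotone (MM m) := by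
  apply monotone_nat_of_le_succ
  intro n
  have := MM_succ_ge hm n
  omega

lemma MM_ge_two_pow (hm : ∀ n, 2 ≤ m n) (n : ℕ) : 2 ^ n ≤ MM m n := by
  induction n with
  | zero => simp [MM]
  | succ n ih =>
    have := MM_succ_ge hm n
    rw [pow_succ]
    omega

lemma lt_MM (hm : ∀ n, 2 ≤ m n) (n : ℕ) : n < MM m n :=
  lt_of_lt_of_le Nat.lt_two_pow_self (MM_ge_two_pow hm n)

lemma MM_dvd {k t : ℕ} (h : k ≤ t) : MM m k ∣ MM m t := by
  induction t, h using Nat.le_induction with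
  | base => exact dvd_rfl
  | succ t _ ih =>
    simp only [MM]
    exact Dvd.dvd.mul_left ih _

lemma psi_eq_prod (hm : ∀ n, 2 ≤ m n) {n R : ℕ} (h : n < MM m R) (x : G m) :
    psi m n x = ∏ k ∈ Finset.range R, rade m k x ^ (n / MM m k % m k) := by
  have key : ∀ R R' : ℕ, n < MM m R → R ≤ R' →
      ∏ k ∈ Finset.range R, rade m k x ^ (n / MM m k % m k) =
      ∏ k ∈ Finset.range R', rade m k x ^ (n / MM m k % m k) := by
    intro R R' h h'
    apply Finset.prod_subset
    · exact Finset.range_mono h'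
    · intro k _ hk2
      have : R ≤ k := by simpa using hk2
      have : n < MM m k := lt_of_lt_of_le h (MM_mono hm this)
      rw [Nat.div_eq_of_lt this]
      simp
  have h1 : n < MM m (n + 1) := lt_of_lt_of_le (lt_MM hm n) (MM_mono hm (Nat.le_succ n))
  unfold psi
  rcases le_total (n + 1) R with h2 | h2
  · exact key _ _ h1 h2
  · exact (key _ _ h h2).symm

lemma psi_congr (hm : ∀ n, 2 ≤ m n) {n R : ℕ} (h : n < MM m R) {x y : G m}
    (hxy : ∀ j < R, x j = y j) : psi m n x = psi m n y := by
  rw [psi_eq_prod hm h, psi_eq_prod hm h]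
  apply Finset.prod_congr rfl
  intro k hk
  simp only [rade, hxy k (by simpa using hk)]

lemma digit_add (hm : ∀ n, 2 ≤ m n) (q t r k : ℕ) (hr : r < MM m t) :
    (q * MM m t + r) / MM m k % m k = (q * MM m t) / MM m k % m k + r / MM m k % m k := by
  rcases lt_or_ge k t with h | h
  · obtain ⟨c, hc⟩ := MM_dvd (m := m) (show k + 1 ≤ t from h)
    have e : q * MM m t = MM m k * (m k * (q * c)) := by rw [hc]; simp only [MM]; ring
    have hk := MM_pos hm k
    rw [e, Nat.mul_add_div hk, Nat.mul_div_cancel_left _ hk]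
    simp
  · obtain ⟨c, hc⟩ := MM_dvd (m := m) h
    have ht := MM_pos hm t
    have hrk : r < MM m k := lt_of_lt_of_le hr (MM_mono hm h)
    rw [Nat.div_eq_of_lt hrk, hc, ← Nat.div_div_eq_div_mul, ← Nat.div_div_eq_div_mul,
      Nat.mul_div_cancel _ ht, mul_comm q, Nat.mul_add_div ht, Nat.div_eq_of_lt hr]
    simp

lemma psi_add (hm : ∀ n, 2 ≤ m n) (q t r : ℕ) (hr : r < MM m t) (x : G m) :
    psi m (q * MM m t + r) x = psi m (q * MM m t) x * psi m r x := by
  set R := q * MM m t + r with hR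
  have h0 : R < MM m R := lt_MM hm R
  rw [psi_eq_prod hm h0, psi_eq_prod hm (lt_of_le_of_lt (by omega : q * MM m t ≤ R) h0),
    psi_eq_prod hm (lt_of_le_of_lt (by omega : r ≤ R) h0), ← Finset.prod_mul_distrib]
  apply Finset.prod_congr rfl
  intro k _
  rw [← pow_add, hR, digit_add hm q t r k hr]

lemma psi_mul_MM (hm : ∀ n, 2 ≤ m n) (q t : ℕ) (hq : q < m t) (x : G m) :
    psi m (q * MM m t) x = rade m t x ^ q := by
  have h : q * MM m t < MM m (t + 1) := by
    simp only [MM]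
    exact Nat.mul_lt_mul_of_pos_right hq (MM_pos hm t)
  rw [psi_eq_prod hm h, Finset.prod_range_succ, Nat.mul_div_cancel _ (MM_pos hm t),
    Nat.mod_eq_of_lt hq]
  rw [Finset.prod_eq_one, one_mul]
  intro k hk
  have hk : k < t := by simpa using hk
  obtain ⟨c, hc⟩ := MM_dvd (m := m) (show k + 1 ≤ t from hk)
  have e : q * MM m t = MM m k * (m k * (q * c)) := by rw [hc]; simp only [MM]; ring
  rw [e, Nat.mul_div_cancel_left _ (MM_pos hm k)]
  simp

lemma psi_zero (x : G m) : psi m 0 x = 1 := by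
  simp [psi]

lemma rade_eq (hm : ∀ n, 2 ≤ m n) (k : ℕ) (x : G m) :
    haveI : NeZero (m k) := ⟨by have := hm k; omega⟩
    rade m k x = (ZMod.toCircle (x k) : ℂ) := by
  haveI : NeZero (m k) := ⟨by have := hm k; omega⟩
  rw [ZMod.toCircle_apply]
  rfl

lemma norm_rade (hm : ∀ n, 2 ≤ m n) (k : ℕ) (x : G m) : ‖rade m k x‖ = 1 := by
  rw [rade_eq hm]
  exact Circle.norm_coe _

lemma norm_psi (hm : ∀ n, 2 ≤ m n) (n : ℕ) (x : G m) : ‖psi m n x‖ = 1 := by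
  unfold psi
  rw [norm_prod]
  apply Finset.prod_eq_one
  intro k _
  rw [norm_pow, norm_rade hm, one_pow]

lemma rade_sub (hm : ∀ n, 2 ≤ m n) (k : ℕ) (x t : G m) :
    rade m k (x - t) = rade m k x * (starRingEnd ℂ) (rade m k t) := by
  haveI : NeZero (m k) := ⟨by have := hm k; omega⟩
  rw [rade_eq hm, rade_eq hm, rade_eq hm, Pi.sub_apply, AddChar.map_sub_eq_div]
  rw [Circle.coe_div, div_eq_mul_inv, ← Circle.coe_inv_eq_conj, Circle.coe_inv]

lemma psi_sub (hm : ∀ n, 2 ≤ m n) (n : ℕ) (x t : G m) :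
    psi m n (x - t) = psi m n x * (starRingEnd ℂ) (psi m n t) := by
  unfold psi
  rw [map_prod, ← Finset.prod_mul_distrib]
  apply Finset.prod_congr rfl
  intro k _
  rw [rade_sub hm, mul_pow, map_pow]

lemma rade_geom (hm : ∀ n, 2 ≤ m n) (k : ℕ) (x : G m) (hx : x k ≠ 0) :
    ∑ q ∈ Finset.range (m k), rade m k x ^ q = 0 := by
  haveI : NeZero (m k) := ⟨by have := hm k; omega⟩
  have h1 : rade m k x ≠ 1 := by
    rw [rade_eq hm]
    intro h
    apply hx
    apply ZMod.injective_toCircle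
    rw [AddChar.map_zero_eq_one]
    exact Circle.ext (by simpa using h)
  have h2 : rade m k x ^ (m k) = 1 := by
    rw [rade_eq hm, ← Circle.coe_pow, ← AddChar.map_nsmul_eq_pow]
    simp
  rw [geom_sum_eq h1, h2]
  simp

lemma D_add (hm : ∀ n, 2 ≤ m n) (q t r : ℕ) (hr : r ≤ MM m t) (x : G m) :
    D m (q * MM m t + r) x = D m (q * MM m t) x + psi m (q * MM m t) x * D m r x := by
  unfold D
  rw [Finset.sum_range_add, Finset.mul_sum]
  congr 1
  apply Finset.sum_congr rfl
  intro k hk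
  apply psi_add hm
  have : k < r := by simpa using hk
  omega

lemma D_mul (hm : ∀ n, 2 ≤ m n) (q t : ℕ) (x : G m) :
    D m (q * MM m t) x = (∑ i ∈ Finset.range q, psi m (i * MM m t) x) * D m (MM m t) x := by
  induction q with
  | zero => simp [D]
  | succ q ih =>
    rw [add_mul, one_mul, D_add hm q t _ le_rfl, ih, Finset.sum_range_succ, add_mul]

lemma D_MM_eq_zero (hm : ∀ n, 2 ≤ m n) (t : ℕ) (x : G m) (s : ℕ) (hs : s < t) (hx : x s ≠ 0) :
    D m (MM m t) x = 0 := by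
  induction t with
  | zero => omega
  | succ t ih =>
    simp only [MM]
    rw [D_mul hm]
    rcases Nat.lt_succ_iff_lt_or_eq.mp hs with h | h
    · rw [ih h, mul_zero]
    · subst h
      rw [Finset.sum_congr rfl (fun i hi => psi_mul_MM hm i s (by simpa using hi) x),
        rade_geom hm s x hx, zero_mul]

lemma D_block (hm : ∀ n, 2 ≤ m n) (q t r : ℕ) (hr : r ≤ MM m t) (x : G m) (s : ℕ) (hs : s < t)
    (hx : x s ≠ 0) : D m (q * MM m t + r) x = psi m (q * MM m t) x * D m r x := by
  rw [D_add hm q t r hr, D_mul hm, D_MM_eq_zero hm t x s hs hx, mul_zero, zero_add]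

lemma norm_D_le (hm : ∀ n, 2 ≤ m n) (n : ℕ) (x : G m) : ‖D m n x‖ ≤ n := by
  unfold D
  refine (norm_sum_le _ _).trans ?_
  simp [norm_psi hm]

lemma norm_D_le_of (hm : ∀ n, 2 ≤ m n) (n : ℕ) (x : G m) (s : ℕ) (hx : x s ≠ 0) :
    ‖D m n x‖ ≤ MM m (s + 1) := by
  have hp := MM_pos hm (s + 1)
  have e : n = (n / MM m (s + 1)) * MM m (s + 1) + n % MM m (s + 1) := by
    rw [mul_comm]; exact (Nat.div_add_mod _ _).symm
  have hlt := Nat.mod_lt n hp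
  rw [e, D_block hm _ (s + 1) _ hlt.le x s (Nat.lt_succ_self s) hx, norm_mul, norm_psi hm, one_mul]
  refine (norm_D_le hm _ x).trans ?_
  exact_mod_cast hlt.le

/-- sums of Dirichlet kernels over blocks -/
lemma sumD_block (hm : ∀ n, 2 ≤ m n) (q t r : ℕ) (hr : r ≤ MM m t) (x : G m) (s : ℕ) (hs : s < t)
    (hx : x s ≠ 0) : ∑ i ∈ Finset.range (q * MM m t + r), D m i x =
      (∑ i ∈ Finset.range q, psi m (i * MM m t) x) * (∑ i ∈ Finset.range (MM m t), D m i x)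
      + psi m (q * MM m t) x * ∑ i ∈ Finset.range r, D m i x := by
  have h1 : ∀ q r, r ≤ MM m t → ∑ i ∈ Finset.range (q * MM m t + r), D m i x =
      ∑ i ∈ Finset.range (q * MM m t), D m i x
      + psi m (q * MM m t) x * ∑ i ∈ Finset.range r, D m i x := by
    intro q r hr
    rw [Finset.sum_range_add, Finset.mul_sum]
    congr 1
    apply Finset.sum_congr rfl
    intro k hk
    have : k < r := by simpa using hk
    exact D_block hm q t k (by omega) x s hs hx
  rw [h1 q r hr]
  congr 1
  clear hr r
  induction q with
  | zero => simp
  | succ q ih =>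
    rw [add_mul, one_mul, h1 q _ le_rfl, ih, Finset.sum_range_succ, add_mul]

lemma sumD_MM (hm : ∀ n, 2 ≤ m n) (x : G m) (s l : ℕ) (hs : s < l) (hxs : x s ≠ 0)
    (hxl : x l ≠ 0) : ∑ i ∈ Finset.range (MM m (l + 1)), D m i x = 0 := by
  have := sumD_block hm (m l) l 0 (Nat.zero_le _) x s hs hxs
  simp only [MM]
  rw [add_zero] at this
  rw [this, Finset.sum_congr rfl (fun i hi => psi_mul_MM hm i l (by simpa using hi) x),
        rade_geom hm l x hxl]
  simp

lemma norm_sumD_le (hm : ∀ n, 2 ≤ m n) (x : G m) (s l : ℕ) (hs : s < l) (hxs : x s ≠ 0)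
    (hxl : x l ≠ 0) (n : ℕ) :
    ‖∑ i ∈ Finset.range n, D m i x‖ ≤ (MM m (s + 1) : ℝ) * MM m (l + 1) := by
  have hp := MM_pos hm (l + 1)
  have e : n = (n / MM m (l + 1)) * MM m (l + 1) + n % MM m (l + 1) := by
    rw [mul_comm]; exact (Nat.div_add_mod _ _).symm
  have hlt := Nat.mod_lt n hp
  rw [e, sumD_block hm _ (l + 1) _ hlt.le x s (by omega) hxs, sumD_MM hm x s l hs hxs hxl, mul_zero,
    zero_add, norm_mul, norm_psi hm, one_mul]
  refine (norm_sum_le _ _).trans ?_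
  refine (Finset.sum_le_sum (fun i _ => norm_D_le_of hm i x s hxs)).trans ?_
  rw [Finset.sum_const, nsmul_eq_mul, mul_comm]
  simp only [Finset.card_range]
  have : ((n % MM m (l + 1) : ℕ) : ℝ) ≤ MM m (l + 1) := by exact_mod_cast hlt.le
  gcongr

end kernelAlg

section cesaro

lemma AC_succ (γ : ℝ) (n : ℕ) :
    AC γ (n + 1) = (∏ j ∈ Finset.range (n + 1), (1 + γ / ((j : ℝ) + 1))) := by
  induction n with
  | zero => simp [AC, add_comm]
  | succ n ih =>
    rw [Finset.prod_range_succ, ← ih]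
    simp only [AC, Nat.succ_ne_zero, if_false]
    rw [Finset.prod_Icc_succ_top (by omega), Nat.factorial_succ (n + 1)]
    have : ((n + 1).factorial : ℝ) ≠ 0 := by positivity
    push_cast
    field_simp
    ring

lemma AC_zero (γ : ℝ) : AC γ 0 = 0 := by simp [AC]

variable {α : ℝ}

lemma rpow_aux1 (hα0 : 0 < α) (hα1 : α < 1) {x : ℝ} (hx : 0 < x) :
    (x + 1) ^ α ≤ x ^ α * (1 + α / x) := by
  have h : (1 + 1 / x) ^ α ≤ 1 + α * (1 / x) :=
    rpow_one_add_le_one_add_mul_self (by have : 0 < 1 / x := by positivity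
                                         linarith) hα0.le hα1.le
  have e : x + 1 = x * (1 + 1 / x) := by field_simp
  rw [e, Real.mul_rpow hx.le (by positivity)]
  have : 1 + α / x = 1 + α * (1 / x) := by ring
  rw [this]
  gcongr

lemma AC_lower (hα0 : 0 < α) (hα1 : α < 1) (n : ℕ) : (n : ℝ) ^ α ≤ AC α n := by
  rcases n with _ | n
  · simp [AC_zero, Real.zero_rpow hα0.ne']
  rw [AC_succ]
  have : ∀ n : ℕ, ((n : ℝ) + 1) ^ α ≤ ∏ j ∈ Finset.range n, (1 + α / ((j : ℝ) + 1)) := by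
    intro n
    induction n with
    | zero => simp
    | succ n ih =>
      rw [Finset.prod_range_succ]
      have h0 : (0 : ℝ) < (n : ℝ) + 1 := by positivity
      have := rpow_aux1 hα0 hα1 h0
      push_cast
      refine this.trans ?_
      gcongr
  refine le_trans ?_ (this (n + 1))
  push_cast
  gcongr
  linarith

lemma AC_pos (hα0 : 0 < α) (hα1 : α < 1) {n : ℕ} (hn : 1 ≤ n) : 0 < AC α n :=
  lt_of_lt_of_le (by positivity) (AC_lower hα0 hα1 n)

lemma fac_pos (hα0 : 0 < α) (j : ℕ) : 0 < 1 + (α - 1) / ((j : ℝ) + 1) := by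
  have h0 : (0 : ℝ) < (j : ℝ) + 1 := by positivity
  have : 1 + (α - 1) / ((j : ℝ) + 1) = (j + α) / (j + 1) := by field_simp; ring
  rw [this]
  positivity

lemma AC'_nonneg (hα0 : 0 < α) (n : ℕ) : 0 ≤ AC (α - 1) n := by
  rcases n with _ | n
  · simp [AC_zero]
  rw [AC_succ]
  exact Finset.prod_nonneg (fun j _ => (fac_pos hα0 j).le)

lemma AC'_antitone (hα0 : 0 < α) (hα1 : α < 1) : Antitone (fun n => AC (α - 1) (n + 1)) := by
  apply antitone_nat_of_succ_le
  intro n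
  have h1 := AC'_nonneg (α := α) hα0 (n + 1)
  rw [AC_succ _ (n + 1), Finset.prod_range_succ, ← AC_succ]
  have : 1 + (α - 1) / (((n + 1 : ℕ) : ℝ) + 1) ≤ 1 := by
    have : (α - 1) / (((n + 1 : ℕ) : ℝ) + 1) ≤ 0 :=
      div_nonpos_of_nonpos_of_nonneg (by linarith) (by positivity)
    linarith
  exact mul_le_of_le_one_right h1 this

lemma AC'_upper (hα0 : 0 < α) (hα1 : α < 1) (n : ℕ) :
    AC (α - 1) (n + 1) ≤ ((n : ℝ) + 1) ^ (α - 1) := by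
  have key : ∀ n : ℕ, ∏ j ∈ Finset.range n, (1 + (α - 1) / ((j : ℝ) + 1)) ≤
      ((n : ℝ) + 1) ^ (α - 1) := by
    intro n
    induction n with
    | zero => simp
    | succ n ih =>
      rw [Finset.prod_range_succ]
      have h0 : (0 : ℝ) < (n : ℝ) + 1 := by positivity
      have h := rpow_aux1 (α := 1 - α) (by linarith) (by linarith) h0
      have hf := fac_pos hα0 n
      push_cast
      have e1 : ((n : ℝ) + 1) ^ (α - 1) = (((n : ℝ) + 1) ^ (1 - α))⁻¹ := by
        rw [← Real.rpow_neg h0.le]; ring_nf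
      have e2 : ((n : ℝ) + 1 + 1) ^ (α - 1) = (((n : ℝ) + 1 + 1) ^ (1 - α))⁻¹ := by
        rw [← Real.rpow_neg (by positivity)]; ring_nf
      refine (mul_le_mul_of_nonneg_right ih hf.le).trans ?_
      rw [e1, e2]
      have p1 : 0 < ((n : ℝ) + 1) ^ (1 - α) := by positivity
      have p2 : 0 < ((n : ℝ) + 1 + 1) ^ (1 - α) := by positivity
      rw [inv_mul_le_iff₀ p1, ← div_eq_mul_inv, le_div_iff₀ p2]
      have h3 : (1 + (α - 1) / ((n : ℝ) + 1)) * (1 + (1 - α) / ((n : ℝ) + 1)) ≤ 1 := by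
        have : (α - 1) / ((n : ℝ) + 1) = - ((1 - α) / ((n : ℝ) + 1)) := by ring
        rw [this]
        nlinarith [sq_nonneg ((1 - α) / ((n : ℝ) + 1))]
      calc _ ≤ (1 + (α - 1) / ((n : ℝ) + 1)) *
            (((n : ℝ) + 1) ^ (1 - α) * (1 + (1 - α) / ((n : ℝ) + 1))) := by gcongr
        _ = ((n : ℝ) + 1) ^ (1 - α) *
          ((1 + (α - 1) / ((n : ℝ) + 1)) * (1 + (1 - α) / ((n : ℝ) + 1))) := by ring
        _ ≤ _ := mul_le_of_le_one_right p1.le h3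
  rw [AC_succ]
  refine (key (n + 1)).trans ?_
  push_cast
  apply Real.rpow_le_rpow_of_nonpos (by positivity) (by linarith) (by linarith)

lemma rpow_aux2 (hα0 : 0 < α) (hα1 : α < 1) (n : ℕ) :
    ((n : ℝ) + 1) ^ (α - 1) ≤ α⁻¹ * (((n : ℝ) + 1) ^ α - (n : ℝ) ^ α) := by
  have h0 : (0 : ℝ) < (n : ℝ) + 1 := by positivity
  have hd : 1 / ((n : ℝ) + 1) ≤ 1 := by
    rw [div_le_one h0]; linarith [Nat.cast_nonneg (α := ℝ) n]
  have h : (1 + -(1 / ((n : ℝ) + 1))) ^ α ≤ 1 + α * (-(1 / ((n : ℝ) + 1))) :=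
    rpow_one_add_le_one_add_mul_self (by linarith) hα0.le hα1.le
  have e : (n : ℝ) = ((n : ℝ) + 1) * (1 + -(1 / ((n : ℝ) + 1))) := by field_simp; ring
  have e' : (n : ℝ) ^ α = ((n : ℝ) + 1) ^ α * (1 + -(1 / ((n : ℝ) + 1))) ^ α := by
    conv_lhs => rw [e]
    rw [Real.mul_rpow h0.le (by linarith)]
  rw [e', Real.rpow_sub_one h0.ne', le_inv_mul_iff₀ hα0]
  have p : 0 < ((n : ℝ) + 1) ^ α := by positivity
  have := mul_le_mul_of_nonneg_left h p.le
  have e3 : α * (((n : ℝ) + 1) ^ α / ((n : ℝ) + 1)) =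
    ((n : ℝ) + 1) ^ α * (α * (1 / ((n : ℝ) + 1))) := by ring
  rw [e3]
  linarith

lemma sum_AC'_le (hα0 : 0 < α) (hα1 : α < 1) (L : ℕ) :
    ∑ i ∈ Finset.range L, AC (α - 1) (i + 1) ≤ α⁻¹ * (L : ℝ) ^ α := by
  induction L with
  | zero => simp [Real.zero_rpow hα0.ne']
  | succ L ih =>
    rw [Finset.sum_range_succ]
    have h1 := AC'_upper hα0 hα1 L
    have h2 := rpow_aux2 hα0 hα1 L
    push_cast
    linarith

lemma abel_bound (c : ℕ → ℝ) (hc0 : ∀ k, 0 ≤ c k) (hc : Monotone c) (d : ℕ → ℂ) (E : ℝ)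
    (hE : ∀ k, ‖∑ i ∈ Finset.range k, d i‖ ≤ E) (K : ℕ) :
    ‖∑ k ∈ Finset.range (K + 1), (c k : ℂ) * d k‖ ≤ 2 * E * c K := by
  have hE0 : 0 ≤ E := (norm_nonneg _).trans (hE 0)
  have key : ‖∑ k ∈ Finset.range (K + 1), (c k : ℂ) * d k
      - (c K : ℂ) * ∑ i ∈ Finset.range (K + 1), d i‖ ≤ E * (c K - c 0) := by
    induction K with
    | zero => simp
    | succ K ih =>
      have e : ∑ k ∈ Finset.range (K + 1 + 1), (c k : ℂ) * d k
        - (c (K + 1) : ℂ) * ∑ i ∈ Finset.range (K + 1 + 1), d i =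
        (∑ k ∈ Finset.range (K + 1), (c k : ℂ) * d k
          - (c K : ℂ) * ∑ i ∈ Finset.range (K + 1), d i) -
        ((c (K + 1) - c K : ℝ) : ℂ) * ∑ i ∈ Finset.range (K + 1), d i := by
        rw [Finset.sum_range_succ _ (K + 1), Finset.sum_range_succ d (K + 1)]
        push_cast
        ring
      rw [e]
      refine (norm_sub_le _ _).trans ?_
      rw [norm_mul, Complex.norm_real, Real.norm_eq_abs,
        abs_of_nonneg (by linarith [hc (Nat.le_succ K)])]
      have h1 := hE (K + 1)
      have h2 : 0 ≤ c (K + 1) - c K := by linarith [hc (Nat.le_succ K)]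
      nlinarith
  have h2 : ‖(c K : ℂ) * ∑ i ∈ Finset.range (K + 1), d i‖ ≤ c K * E := by
    rw [norm_mul, Complex.norm_real, Real.norm_eq_abs, abs_of_nonneg (hc0 K)]
    exact mul_le_mul_of_nonneg_left (hE _) (hc0 K)
  have h3 := norm_le_norm_sub_add (∑ k ∈ Finset.range (K + 1), (c k : ℂ) * d k)
    ((c K : ℂ) * ∑ i ∈ Finset.range (K + 1), d i)
  have h4 := hc0 0
  nlinarith

/-- Convolution type sum. -/
def cs (α : ℝ) (d : ℕ → ℂ) (n : ℕ) : ℂ :=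
  ∑ k ∈ Finset.Icc 1 n, ((AC (α - 1) (n - k) : ℝ) : ℂ) * d k

lemma cs_eq (d : ℕ → ℂ) (hd : d 0 = 0) (n : ℕ) :
    cs α d n = ∑ k ∈ Finset.range n, ((AC (α - 1) (n - 1 - k + 1) : ℝ) : ℂ) * d k := by
  have h1 : cs α d n = ∑ k ∈ Finset.range (n + 1), ((AC (α - 1) (n - k) : ℝ) : ℂ) * d k := by
    unfold cs
    apply Finset.sum_subset
    · intro k hk
      simp at hk ⊢
      omega
    · intro k hk hk'
      simp at hk hk'
      have : k = 0 := by omega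
      simp [this, hd]
  rw [h1, Finset.sum_range_succ]
  simp only [Nat.sub_self, AC_zero]
  simp only [Complex.ofReal_zero, zero_mul, add_zero]
  apply Finset.sum_congr rfl
  intro k hk
  have : k < n := by simpa using hk
  rw [show n - 1 - k + 1 = n - k by omega]

lemma cs_bound1 (hα0 : 0 < α) (hα1 : α < 1) (d : ℕ → ℂ) (A : ℝ)
    (hA : ∀ k, ‖d k‖ ≤ A) (n : ℕ) :
    ‖∑ k ∈ Finset.range n, ((AC (α - 1) (n - 1 - k + 1) : ℝ) : ℂ) * d k‖
      ≤ α⁻¹ * A * (n : ℝ) ^ α := by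
  have hA0 : 0 ≤ A := (norm_nonneg _).trans (hA 0)
  refine (norm_sum_le _ _).trans ?_
  have h1 : ∀ k ∈ Finset.range n, ‖((AC (α - 1) (n - 1 - k + 1) : ℝ) : ℂ) * d k‖ ≤
      AC (α - 1) (n - 1 - k + 1) * A := by
    intro k _
    have h := AC'_nonneg hα0 (n - 1 - k + 1)
    rw [norm_mul, Complex.norm_real, Real.norm_eq_abs, abs_of_nonneg h]
    exact mul_le_mul_of_nonneg_left (hA k) h
  refine (Finset.sum_le_sum h1).trans ?_
  rw [← Finset.sum_mul, Finset.sum_range_reflect (fun i => AC (α - 1) (i + 1)) n]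
  have := sum_AC'_le hα0 hα1 n
  nlinarith

lemma cs_bound2 (hα0 : 0 < α) (hα1 : α < 1) (d : ℕ → ℂ) (A : ℝ)
    (hA : ∀ k, ‖d k‖ ≤ A) (L : ℕ) (hL : 1 ≤ L)
    (hE : ∀ k, ‖∑ i ∈ Finset.range k, d i‖ ≤ A * L) (n : ℕ) :
    ‖∑ k ∈ Finset.range n, ((AC (α - 1) (n - 1 - k + 1) : ℝ) : ℂ) * d k‖
      ≤ (α⁻¹ + 2) * A * (L : ℝ) ^ α := by
  have hA0 : 0 ≤ A := (norm_nonneg _).trans (hA 0)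
  have hp : (0 : ℝ) ≤ (L : ℝ) ^ α := by positivity
  have hL' : (0 : ℝ) < L := by exact_mod_cast hL
  rcases le_or_gt n L with h | h
  · refine (cs_bound1 hα0 hα1 d A hA n).trans ?_
    have : (n : ℝ) ^ α ≤ (L : ℝ) ^ α := by gcongr
    have h2 : 0 ≤ α⁻¹ := by positivity
    calc α⁻¹ * A * (n : ℝ) ^ α ≤ (α⁻¹ * A) * (L : ℝ) ^ α := by gcongr
      _ ≤ _ := by
        have : 0 ≤ 2 * A * (L : ℝ) ^ α := by positivity
        linarith
  · obtain ⟨K, rfl⟩ : ∃ K, n = (K + 1) + L := ⟨n - L - 1, by omega⟩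
    rw [Finset.sum_range_add]
    refine (norm_add_le _ _).trans ?_
    have h1 := abel_bound (fun k => AC (α - 1) (K + 1 + L - 1 - k + 1))
      (fun k => AC'_nonneg hα0 _)
      (fun a b hab => AC'_antitone hα0 hα1 (by omega : K + 1 + L - 1 - b ≤ K + 1 + L - 1 - a))
      d (A * L) hE K
    have h2 := cs_bound1 hα0 hα1 (fun j => d (K + 1 + j)) A (fun k => hA _) L
    have h3 : ∀ j ∈ Finset.range L,
        ((AC (α - 1) (K + 1 + L - 1 - (K + 1 + j) + 1) : ℝ) : ℂ) * d (K + 1 + j) =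
        ((AC (α - 1) (L - 1 - j + 1) : ℝ) : ℂ) * d (K + 1 + j) := by
      intro j _
      rw [show K + 1 + L - 1 - (K + 1 + j) = L - 1 - j by omega]
    rw [Finset.sum_congr rfl h3]
    have h4 : AC (α - 1) (K + 1 + L - 1 - K + 1) ≤ (L : ℝ) ^ (α - 1) := by
      rw [show K + 1 + L - 1 - K = L by omega]
      refine (AC'_upper hα0 hα1 L).trans ?_
      exact Real.rpow_le_rpow_of_nonpos hL' (by linarith) (by linarith)
    have h5 : (L : ℝ) * (L : ℝ) ^ (α - 1) = (L : ℝ) ^ α := by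
      rw [Real.rpow_sub_one hL'.ne']; field_simp
    have h6 : 2 * (A * L) * AC (α - 1) (K + 1 + L - 1 - K + 1) ≤ 2 * A * (L : ℝ) ^ α := by
      rw [← h5]
      have := mul_le_mul_of_nonneg_left h4 (by positivity : 0 ≤ 2 * (A * L))
      linarith
    linarith

/-- The Cesàro kernel. -/
def Ck (m : ℕ → ℕ) (α : ℝ) (n : ℕ) (y : G m) : ℂ :=
  ((AC α n : ℝ) : ℂ)⁻¹ * cs α (fun k => D m k y) n

lemma D_zero (m : ℕ → ℕ) (y : G m) : D m 0 y = 0 := by simp [D]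

lemma norm_Ck (hα0 : 0 < α) (hα1 : α < 1) {m : ℕ → ℕ} {n : ℕ} (hn : 1 ≤ n) (y : G m) (V : ℝ)
    (hV : ‖∑ k ∈ Finset.range n, ((AC (α - 1) (n - 1 - k + 1) : ℝ) : ℂ) * D m k y‖ ≤ V) :
    ‖Ck m α n y‖ ≤ (n : ℝ) ^ (-α) * V := by
  unfold Ck
  rw [cs_eq _ (D_zero m y), norm_mul, norm_inv, Complex.norm_real, Real.norm_eq_abs,
    abs_of_pos (AC_pos hα0 hα1 hn), Real.rpow_neg (by positivity)]
  have hn' : (0 : ℝ) < n := by exact_mod_cast hn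
  have := AC_lower hα0 hα1 n
  have hp : 0 < (n : ℝ) ^ α := by positivity
  gcongr

/-- second-nonzero estimate -/
lemma Ck_est2 (hα0 : 0 < α) (hα1 : α < 1) {m : ℕ → ℕ} (hm : ∀ n, 2 ≤ m n) {B : ℕ}
    (hB : ∀ n, m n ≤ B) {n : ℕ} (hn : 1 ≤ n) (y : G m) (s l : ℕ) (hs : s < l)
    (hys : y s ≠ 0) (hyl : y l ≠ 0) :
    ‖Ck m α n y‖ ≤ (n : ℝ) ^ (-α) * ((α⁻¹ + 2) * B ^ 2 * (MM m s * (MM m l : ℝ) ^ α)) := by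
  apply norm_Ck hα0 hα1 hn
  refine (cs_bound2 hα0 hα1 (fun k => D m k y) _ (fun k => norm_D_le_of hm k y s hys) _
    (MM_pos hm (l + 1)) (norm_sumD_le hm y s l hs hys hyl) n).trans ?_
  have hB1 : (1 : ℝ) ≤ B := by
    have := hB 0; have := hm 0; exact_mod_cast (by omega : 1 ≤ B)
  have h1 : (MM m (s + 1) : ℝ) ≤ B * MM m s := by
    simp only [MM]; push_cast
    have : (m s : ℝ) ≤ B := by exact_mod_cast hB s
    gcongr
  have h2 : (MM m (l + 1) : ℝ) ^ α ≤ B * (MM m l : ℝ) ^ α := by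
    have : (MM m (l + 1) : ℝ) ≤ B * MM m l := by
      simp only [MM]; push_cast
      have : (m l : ℝ) ≤ B := by exact_mod_cast hB l
      gcongr
    calc (MM m (l + 1) : ℝ) ^ α ≤ (B * MM m l : ℝ) ^ α := by gcongr
      _ = (B : ℝ) ^ α * (MM m l : ℝ) ^ α := Real.mul_rpow (by positivity) (by positivity)
      _ ≤ (B : ℝ) ^ (1 : ℝ) * (MM m l : ℝ) ^ α := by gcongr
      _ = _ := by rw [Real.rpow_one]
  calc _ ≤ (α⁻¹ + 2) * (B * MM m s) * (B * (MM m l : ℝ) ^ α) := by gcongr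
    _ = _ := by ring

/-- first-nonzero estimate -/
lemma Ck_est1 (hα0 : 0 < α) (hα1 : α < 1) {m : ℕ → ℕ} {n : ℕ} (hn : 1 ≤ n) (y : G m) (A : ℝ)
    (hA : ∀ k, ‖D m k y‖ ≤ A) :
    ‖Ck m α n y‖ ≤ (n : ℝ) ^ (-α) * (α⁻¹ * A * (n : ℝ) ^ α) := by
  apply norm_Ck hα0 hα1 hn
  exact cs_bound1 hα0 hα1 (fun k => D m k y) _ hA n

end cesaro

section pointwise

/-- constant for geometric sums -/
def Cg (β : ℝ) : ℝ := (1 - (2 : ℝ) ^ (-β))⁻¹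

lemma two_rpow_lt {β : ℝ} (hβ : 0 < β) : (2 : ℝ) ^ (-β) < 1 :=
  Real.rpow_lt_one_of_one_lt_of_neg (by norm_num) (by linarith)

lemma Cg_ge_one {β : ℝ} (hβ : 0 < β) : 1 ≤ Cg β := by
  have h := two_rpow_lt hβ
  have h2 : 0 < (2 : ℝ) ^ (-β) := by positivity
  unfold Cg
  rw [one_le_inv₀ (by linarith)]
  linarith

variable {m : ℕ → ℕ}

lemma MM_posR (hm : ∀ n, 2 ≤ m n) (n : ℕ) : (0 : ℝ) < MM m n := by
  exact_mod_cast MM_pos hm n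

lemma geom1 (hm : ∀ n, 2 ≤ m n) {β : ℝ} (hβ : 0 < β) (J : ℕ) :
    ∑ l ∈ Finset.range (J + 1), (MM m l : ℝ) ^ β ≤ Cg β * (MM m J : ℝ) ^ β := by
  have hc := Cg_ge_one hβ
  induction J with
  | zero => simpa [MM] using hc
  | succ J ih =>
    rw [Finset.sum_range_succ]
    have h1 : (MM m J : ℝ) ^ β ≤ (2 : ℝ) ^ (-β) * (MM m (J + 1) : ℝ) ^ β := by
      have h2 : (2 : ℝ) * MM m J ≤ MM m (J + 1) := by exact_mod_cast MM_succ_ge hm J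
      have h3 : (2 * MM m J : ℝ) ^ β ≤ (MM m (J + 1) : ℝ) ^ β := by gcongr
      rw [Real.mul_rpow (by norm_num) (by positivity)] at h3
      rw [Real.rpow_neg (by norm_num), le_inv_mul_iff₀ (by positivity)]
      exact h3
    have h4 : Cg β * (1 - (2 : ℝ) ^ (-β)) = 1 := by
      unfold Cg
      exact inv_mul_cancel₀ (by linarith [two_rpow_lt hβ])
    have h5 : (0 : ℝ) ≤ (MM m (J + 1) : ℝ) ^ β := by positivity
    have h6 := mul_le_mul_of_nonneg_left h1 (by linarith : 0 ≤ Cg β)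
    have h7 : Cg β * (MM m (J + 1) : ℝ) ^ β =
      Cg β * ((2 : ℝ) ^ (-β) * (MM m (J + 1) : ℝ) ^ β) + (MM m (J + 1) : ℝ) ^ β := by
      calc _ = Cg β * ((2 : ℝ) ^ (-β) * (MM m (J + 1) : ℝ) ^ β)
          + (Cg β * (1 - (2 : ℝ) ^ (-β))) * (MM m (J + 1) : ℝ) ^ β := by ring
        _ = _ := by rw [h4, one_mul]
    linarith

lemma MM_add_ge (hm : ∀ n, 2 ≤ m n) (N i : ℕ) : 2 ^ i * MM m N ≤ MM m (N + i) := by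
  induction i with
  | zero => simp
  | succ i ih =>
    have := MM_succ_ge hm (N + i)
    rw [pow_succ, ← add_assoc]
    nlinarith

lemma geom2 (hm : ∀ n, 2 ≤ m n) {β : ℝ} (hβ : 0 < β) (N J : ℕ) :
    ∑ l ∈ Finset.range (J + 1), (if N < l then (MM m l : ℝ) ^ (-β) else 0)
      ≤ Cg β * (MM m N : ℝ) ^ (-β) := by
  have key : ∀ r : ℕ, ∑ l ∈ Finset.Ico N (N + r), (MM m l : ℝ) ^ (-β)
      ≤ Cg β * (MM m N : ℝ) ^ (-β) := by
    intro r
    rw [Finset.sum_Ico_eq_sum_range]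
    have h1 : ∀ i ∈ Finset.range (N + r - N), (MM m (N + i) : ℝ) ^ (-β) ≤
        ((2 : ℝ) ^ (-β)) ^ i * (MM m N : ℝ) ^ (-β) := by
      intro i _
      have h2 : (2 : ℝ) ^ i * MM m N ≤ MM m (N + i) := by exact_mod_cast MM_add_ge hm N i
      have hp := MM_posR hm N
      calc (MM m (N + i) : ℝ) ^ (-β) ≤ ((2 : ℝ) ^ i * MM m N) ^ (-β) :=
            Real.rpow_le_rpow_of_nonpos (by positivity) h2 (by linarith)
        _ = _ := by
          rw [Real.mul_rpow (by positivity) (by positivity), ← Real.rpow_natCast_mul (by norm_num),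
            mul_comm (i : ℝ), Real.rpow_mul_natCast (by norm_num)]
    refine (Finset.sum_le_sum h1).trans ?_
    rw [← Finset.sum_mul]
    gcongr
    unfold Cg
    have h2 : 0 ≤ (2 : ℝ) ^ (-β) := by positivity
    calc _ ≤ ∑' i : ℕ, ((2 : ℝ) ^ (-β)) ^ i :=
          (summable_geometric_of_lt_one h2 (two_rpow_lt hβ)).sum_le_tsum _ (fun i _ => by positivity)
      _ = _ := tsum_geometric_of_lt_one h2 (two_rpow_lt hβ)
  refine le_trans ?_ (key (J + 1))
  rw [← Finset.sum_filter]
  apply Finset.sum_le_sum_of_subset_of_nonneg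
  · intro l hl
    simp at hl ⊢
    omega
  · intro l _ _
    positivity

/-- Points agreeing with `x` in the first `l` coordinates, except perhaps at `s`. -/
def Es (m : ℕ → ℕ) (s l : ℕ) (x : G m) : Set (G m) := {t | ∀ j < l, j ≠ s → t j = x j}

open Classical in
/-- real indicator -/
def ind {X : Type*} (S : Set X) (t : X) : ℝ := if t ∈ S then 1 else 0

lemma ind_nonneg {X : Type*} (S : Set X) (t : X) : 0 ≤ ind S t := by
  unfold ind; split_ifs <;> norm_num

lemma ind_of_mem {X : Type*} {S : Set X} {t : X} (h : t ∈ S) : ind S t = 1 := by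
  simp [ind, h]

lemma ind_of_notMem {X : Type*} {S : Set X} {t : X} (h : t ∉ S) : ind S t = 0 := by
  simp [ind, h]

lemma MM_succ_leR (hm : ∀ n, 2 ≤ m n) {B : ℕ} (hB : ∀ n, m n ≤ B) (s : ℕ) :
    (MM m (s + 1) : ℝ) ≤ B * MM m s := by
  simp only [MM]; push_cast
  have : (m s : ℝ) ≤ B := by exact_mod_cast hB s
  gcongr

lemma B_ge_one (hm : ∀ n, 2 ≤ m n) {B : ℕ} (hB : ∀ n, m n ≤ B) : (1 : ℝ) ≤ B := by
  have := hB 0; have := hm 0; exact_mod_cast (by omega : 1 ≤ B)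

lemma Ck_point {α : ℝ} (hα0 : 0 < α) (hα1 : α < 1) (hm : ∀ n, 2 ≤ m n) {B : ℕ}
    (hB : ∀ n, m n ≤ B) {n J : ℕ} (hn : 1 ≤ n) (hJ2 : n < MM m (J + 1)) (x t : G m) :
    ∃ s l, s ≤ l ∧ l ≤ J ∧ t ∈ Es m s l x ∧
    ‖Ck m α n (x - t)‖ ≤ (n : ℝ) ^ (-α) * ((α⁻¹ + 2) * B ^ 2 * (MM m s * (MM m l : ℝ) ^ α)) := by
  classical
  have hB1 := B_ge_one hm hB
  have hsub : ∀ j, (x - t) j = 0 → t j = x j := by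
    intro j hj
    rw [Pi.sub_apply, sub_eq_zero] at hj
    exact hj.symm
  have hnJ : (n : ℝ) ≤ B * MM m J := by
    have h1 : (n : ℝ) ≤ MM m (J + 1) := by exact_mod_cast hJ2.le
    exact h1.trans (MM_succ_leR hm hB J)
  have hnα : (n : ℝ) ^ α ≤ B * (MM m J : ℝ) ^ α := by
    calc (n : ℝ) ^ α ≤ (B * MM m J : ℝ) ^ α := by gcongr
      _ = (B : ℝ) ^ α * (MM m J : ℝ) ^ α := Real.mul_rpow (by positivity) (by positivity)
      _ ≤ (B : ℝ) ^ (1 : ℝ) * (MM m J : ℝ) ^ α := by gcongr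
      _ = _ := by rw [Real.rpow_one]
  have hfin : ∀ s, ∀ A : ℝ, 0 ≤ A → A ≤ B * MM m s → α⁻¹ * A * (n : ℝ) ^ α ≤
      ((α⁻¹ + 2) * B ^ 2 * (MM m s * (MM m J : ℝ) ^ α)) := by
    intro s A hA0 hA
    calc α⁻¹ * A * (n : ℝ) ^ α ≤ (α⁻¹ + 2) * (B * MM m s) * (B * (MM m J : ℝ) ^ α) := by
          gcongr
          linarith
      _ = _ := by ring
  by_cases h1 : ∀ j < J, (x - t) j = 0
  · refine ⟨J, J, le_rfl, le_rfl, fun j hj _ => hsub j (h1 j hj), ?_⟩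
    apply norm_Ck hα0 hα1 hn
    refine le_trans ?_ (hfin J n (by positivity) hnJ)
    have h2 := cs_bound1 hα0 hα1 (fun k => D m (min k n) (x - t)) n
      (fun k => (norm_D_le hm _ _).trans (by exact_mod_cast min_le_right k n)) n
    refine le_of_eq_of_le ?_ h2
    congr 1
    apply Finset.sum_congr rfl
    intro k hk
    have : k < n := by simpa using hk
    simp only [min_eq_left this.le]
  · push Not at h1
    set s := Nat.find h1 with hs
    obtain ⟨hsJ, hys⟩ : s < J ∧ (x - t) s ≠ 0 := Nat.find_spec h1
    have hsmin : ∀ j < s, (x - t) j = 0 := by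
      intro j hj
      by_contra h
      exact Nat.find_min h1 hj ⟨by omega, h⟩
    by_cases h2 : ∀ j < J, j ≠ s → (x - t) j = 0
    · refine ⟨s, J, hsJ.le, le_rfl, fun j hj hjs => hsub j (h2 j hj hjs), ?_⟩
      refine (Ck_est1 hα0 hα1 hn (x - t) _ (fun k => norm_D_le_of hm k _ s hys)).trans ?_
      have := hfin s (MM m (s + 1)) (by positivity) (MM_succ_leR hm hB s)
      gcongr
    · push Not at h2
      set l := Nat.find h2 with hl
      obtain ⟨hlJ, hls, hyl⟩ : l < J ∧ l ≠ s ∧ (x - t) l ≠ 0 := Nat.find_spec h2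
      have hlmin : ∀ j < l, j ≠ s → (x - t) j = 0 := by
        intro j hj hjs
        by_contra h
        exact Nat.find_min h2 hj ⟨by omega, hjs, h⟩
      have hsl : s < l := by
        rcases lt_trichotomy s l with h | h | h
        · exact h
        · exact absurd h.symm hls
        · exact absurd (hsmin l h) hyl
      exact ⟨s, l, hsl.le, hlJ.le, fun j hj hjs => hsub j (hlmin j hj hjs),
        Ck_est2 hα0 hα1 hm hB hn _ s l hsl hys hyl⟩

lemma Ck_sum {α : ℝ} (hα0 : 0 < α) (hα1 : α < 1) (hm : ∀ n, 2 ≤ m n) {B : ℕ}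
    (hB : ∀ n, m n ≤ B) {n J : ℕ} (hn : 1 ≤ n) (hJ2 : n < MM m (J + 1)) (x t : G m) :
    ‖Ck m α n (x - t)‖ ≤ (α⁻¹ + 2) * B ^ 2 * (n : ℝ) ^ (-α) *
      ∑ l ∈ Finset.range (J + 1), ∑ s ∈ Finset.range (l + 1),
        MM m s * (MM m l : ℝ) ^ α * ind (Es m s l x) t := by
  obtain ⟨s, l, hsl, hlJ, ht, hb⟩ := Ck_point hα0 hα1 hm hB hn hJ2 x t
  refine hb.trans ?_
  have hnn : ∀ s l, 0 ≤ MM m s * (MM m l : ℝ) ^ α * ind (Es m s l x) t := by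
    intro s l
    have := ind_nonneg (Es m s l x) t
    positivity
  have h1 : MM m s * (MM m l : ℝ) ^ α * ind (Es m s l x) t ≤
      ∑ s ∈ Finset.range (l + 1), MM m s * (MM m l : ℝ) ^ α * ind (Es m s l x) t :=
    Finset.single_le_sum (f := fun s => MM m s * (MM m l : ℝ) ^ α * ind (Es m s l x) t)
      (fun s _ => hnn s l) (by simp; omega)
  have h2 : ∑ s ∈ Finset.range (l + 1), MM m s * (MM m l : ℝ) ^ α * ind (Es m s l x) t ≤
      ∑ l ∈ Finset.range (J + 1), ∑ s ∈ Finset.range (l + 1),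
        MM m s * (MM m l : ℝ) ^ α * ind (Es m s l x) t :=
    Finset.single_le_sum (f := fun l => ∑ s ∈ Finset.range (l + 1),
        MM m s * (MM m l : ℝ) ^ α * ind (Es m s l x) t)
      (fun l _ => Finset.sum_nonneg (fun s _ => hnn s l)) (by simp; omega)
  rw [ind_of_mem ht, mul_one] at h1
  have h3 := h1.trans h2
  calc _ = (α⁻¹ + 2) * B ^ 2 * (n : ℝ) ^ (-α) * (MM m s * (MM m l : ℝ) ^ α) := by ring
    _ ≤ _ := by gcongr

end pointwise

section measure

variable {m : ℕ → ℕ}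

lemma measurableSet_coord (j : ℕ) (a : ZMod (m j)) : MeasurableSet {t : G m | t j = a} := by
  have h : Measurable (fun t : G m => t j) := measurable_pi_apply j
  exact h (MeasurableSet.singleton a)

lemma measurableSet_Es (s l : ℕ) (x : G m) : MeasurableSet (Es m s l x) := by
  have : Es m s l x = ⋂ j ∈ {j : ℕ | j < l ∧ j ≠ s}, {t : G m | t j = x j} := by
    ext t; simp [Es]
  rw [this]
  exact MeasurableSet.biInter (Set.to_countable _) (fun j _ => measurableSet_coord j _)

lemma measurableSet_cyl (l : ℕ) (x : G m) : MeasurableSet (cyl m l x) := by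
  have : cyl m l x = ⋂ j ∈ {j : ℕ | j < l}, {t : G m | t j = x j} := by
    ext t; simp [cyl]
  rw [this]
  exact MeasurableSet.biInter (Set.to_countable _) (fun j _ => measurableSet_coord j _)

variable {μ : Measure (G m)} [IsProbabilityMeasure μ]

lemma real_cyl (hμ : ∀ (n : ℕ) (x : G m), μ (cyl m n x) = ((MM m n : ℝ≥0∞))⁻¹) (n : ℕ) (x : G m) :
    μ.real (cyl m n x) = ((MM m n : ℝ))⁻¹ := by
  simp [Measure.real, hμ]

lemma real_Es_le (hm : ∀ n, 2 ≤ m n) {B : ℕ} (hB : ∀ n, m n ≤ B)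
    (hμ : ∀ (n : ℕ) (x : G m), μ (cyl m n x) = ((MM m n : ℝ≥0∞))⁻¹)
    (s l : ℕ) (x : G m) : μ.real (Es m s l x) ≤ B * ((MM m l : ℝ))⁻¹ := by
  have : NeZero (m s) := ⟨by have := hm s; omega⟩
  have hsub : Es m s l x ⊆ ⋃ a ∈ (Finset.univ : Finset (ZMod (m s))),
      cyl m l (Function.update x s a) := by
    intro t ht
    simp only [Set.mem_iUnion, Finset.mem_univ, exists_prop, true_and]
    refine ⟨t s, ?_⟩
    intro j hj
    by_cases h : j = s
    · subst h; simp
    · rw [Function.update_of_ne h]; exact ht j hj h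
  calc μ.real (Es m s l x) ≤ μ.real (⋃ a ∈ (Finset.univ : Finset (ZMod (m s))),
      cyl m l (Function.update x s a)) := measureReal_mono hsub (measure_ne_top μ _)
    _ ≤ ∑ a ∈ (Finset.univ : Finset (ZMod (m s))), μ.real (cyl m l (Function.update x s a)) :=
      measureReal_biUnion_finset_le _ _
    _ = m s * ((MM m l : ℝ))⁻¹ := by
      simp [real_cyl hμ, ZMod.card]
    _ ≤ _ := by
      have : (m s : ℝ) ≤ B := by exact_mod_cast hB s
      gcongr

/-- The three cases for the measure of the intersection. -/
lemma inter1 (hμ : ∀ (n : ℕ) (x : G m), μ (cyl m n x) = ((MM m n : ℝ≥0∞))⁻¹)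
    (s l N : ℕ) (hl : l ≤ N) (x x0 : G m) :
    μ.real (Es m s l x ∩ cyl m N x0) ≤ ind (Es m s l x0) x * ((MM m N : ℝ))⁻¹ := by
  by_cases h : x ∈ Es m s l x0
  · rw [ind_of_mem h, one_mul, ← real_cyl hμ N x0]
    exact measureReal_mono Set.inter_subset_right
  · have : Es m s l x ∩ cyl m N x0 = ∅ := by
      rw [Set.eq_empty_iff_forall_notMem]
      rintro t ⟨h1, h2⟩
      apply h
      intro j hj hjs
      rw [← h1 j hj hjs, h2 j (by omega)]
    rw [this, ind_of_notMem h]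
    simp

lemma inter2 (hμ : ∀ (n : ℕ) (x : G m), μ (cyl m n x) = ((MM m n : ℝ≥0∞))⁻¹)
    (s l N : ℕ) (hl : N < l) (hs : s < N) (x x0 : G m) :
    μ.real (Es m s l x ∩ cyl m N x0) ≤ ind (Es m s N x0) x * ((MM m l : ℝ))⁻¹ := by
  by_cases h : x ∈ Es m s N x0
  · rw [ind_of_mem h, one_mul, ← real_cyl hμ l (fun j => if j < N then x0 j else x j)]
    refine measureReal_mono ?_ (measure_ne_top μ _)
    rintro t ⟨h1, h2⟩ j hj
    by_cases hjN : j < N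
    · simp only [hjN, if_true]
      exact h2 j hjN
    · simp only [hjN, if_false]
      exact h1 j hj (by omega)
  · have : Es m s l x ∩ cyl m N x0 = ∅ := by
      rw [Set.eq_empty_iff_forall_notMem]
      rintro t ⟨h1, h2⟩
      apply h
      intro j hj hjs
      rw [← h1 j (by omega) hjs, h2 j hj]
    rw [this, ind_of_notMem h]
    simp

lemma inter3 (hm : ∀ n, 2 ≤ m n) {B : ℕ} (hB : ∀ n, m n ≤ B)
    (hμ : ∀ (n : ℕ) (x : G m), μ (cyl m n x) = ((MM m n : ℝ≥0∞))⁻¹)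
    (s l N : ℕ) (hl : N < l) (hs : N ≤ s) (x x0 : G m) :
    μ.real (Es m s l x ∩ cyl m N x0) ≤ ind (cyl m N x0) x * (B * ((MM m l : ℝ))⁻¹) := by
  by_cases h : x ∈ cyl m N x0
  · rw [ind_of_mem h, one_mul]
    exact (measureReal_mono Set.inter_subset_left).trans (real_Es_le hm hB hμ s l x)
  · have : Es m s l x ∩ cyl m N x0 = ∅ := by
      rw [Set.eq_empty_iff_forall_notMem]
      rintro t ⟨h1, h2⟩
      apply h
      intro j hj
      rw [← h1 j (by omega) (by omega), h2 j hj]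
    rw [this, ind_of_notMem h]
    simp

/-- The majorant. -/
def Th (m : ℕ → ℕ) (α : ℝ) (N : ℕ) (x0 x : G m) : ℝ :=
  ∑ l ∈ Finset.range (N + 1), ∑ s ∈ Finset.range (l + 1),
        MM m s * (MM m l : ℝ) ^ α * ind (Es m s l x0) x

lemma sum_MM_le (hm : ∀ n, 2 ≤ m n) (l : ℕ) :
    ∑ s ∈ Finset.range (l + 1), (MM m s : ℝ) ≤ 2 * MM m l := by
  induction l with
  | zero => simp [MM]
  | succ l ih =>
    rw [Finset.sum_range_succ]
    have h2 : (2 : ℝ) * MM m l ≤ MM m (l + 1) := by exact_mod_cast MM_succ_ge hm l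
    linarith

lemma inner_le {α : ℝ} (hm : ∀ n, 2 ≤ m n) {B : ℕ}
    (hB : ∀ n, m n ≤ B) (hμ : ∀ (n : ℕ) (x : G m), μ (cyl m n x) = ((MM m n : ℝ≥0∞))⁻¹)
    (l N : ℕ) (x x0 : G m) :
    ∑ s ∈ Finset.range (l + 1),
        MM m s * (MM m l : ℝ) ^ α * μ.real (Es m s l x ∩ cyl m N x0) ≤
    (if l ≤ N then (∑ s ∈ Finset.range (l + 1),
        MM m s * (MM m l : ℝ) ^ α * ind (Es m s l x0) x) * ((MM m N : ℝ))⁻¹ else 0)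
    + (if N < l then (MM m l : ℝ) ^ (-(1 - α)) else 0) * ((MM m N : ℝ) ^ (-α) * Th m α N x0 x)
    + 2 * B * (MM m l : ℝ) ^ α * ind (cyl m N x0) x := by
  have hind := ind_nonneg (cyl m N x0) x
  have hlp := MM_posR hm l
  rcases le_or_gt l N with h | h
  · rw [if_pos h, if_neg (by omega), zero_mul, add_zero, Finset.sum_mul]
    have h1 : ∑ s ∈ Finset.range (l + 1),
        MM m s * (MM m l : ℝ) ^ α * μ.real (Es m s l x ∩ cyl m N x0) ≤
        ∑ s ∈ Finset.range (l + 1),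
        MM m s * (MM m l : ℝ) ^ α * ind (Es m s l x0) x * ((MM m N : ℝ))⁻¹ := by
      apply Finset.sum_le_sum
      intro s _
      rw [mul_assoc _ (ind _ _)]
      gcongr
      exact inter1 hμ s l N h x x0
    have h2 : 0 ≤ 2 * B * (MM m l : ℝ) ^ α * ind (cyl m N x0) x := by positivity
    linarith
  · rw [if_neg (by omega), if_pos h, zero_add]
    have hNp := MM_posR hm N
    have e1 : (MM m l : ℝ) ^ α * (MM m l : ℝ)⁻¹ = (MM m l : ℝ) ^ (-(1 - α)) := by
      rw [← Real.rpow_neg_one, ← Real.rpow_add hlp]; ring_nf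
    have h1 : ∀ s ∈ Finset.range (l + 1),
        MM m s * (MM m l : ℝ) ^ α * μ.real (Es m s l x ∩ cyl m N x0) ≤
        (if s < N then MM m s * ind (Es m s N x0) x else 0) * (MM m l : ℝ) ^ (-(1 - α)) +
        (MM m s) * (B * (MM m l : ℝ) ^ (-(1 - α)) * ind (cyl m N x0) x) := by
      intro s _
      rcases lt_or_ge s N with hs | hs
      · rw [if_pos hs]
        have := inter2 hμ s l N h hs x x0
        have hi := ind_nonneg (Es m s N x0) x
        calc _ ≤ MM m s * (MM m l : ℝ) ^ α * (ind (Es m s N x0) x * ((MM m l : ℝ))⁻¹) := by gcongr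
          _ = MM m s * ind (Es m s N x0) x * ((MM m l : ℝ) ^ α * (MM m l : ℝ)⁻¹) := by ring
          _ ≤ _ := by
            rw [e1]
            have : 0 ≤ (MM m s) * (B * (MM m l : ℝ) ^ (-(1 - α)) * ind (cyl m N x0) x) := by
              positivity
            linarith
      · rw [if_neg (by omega), zero_mul, zero_add]
        have := inter3 hm hB hμ s l N h hs x x0
        calc _ ≤ MM m s * (MM m l : ℝ) ^ α * (ind (cyl m N x0) x * (B * ((MM m l : ℝ))⁻¹)) := by
              gcongr
          _ = MM m s * (B * ((MM m l : ℝ) ^ α * (MM m l : ℝ)⁻¹) * ind (cyl m N x0) x) := by ring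
          _ ≤ _ := by rw [e1]
    refine (Finset.sum_le_sum h1).trans ?_
    rw [Finset.sum_add_distrib, ← Finset.sum_mul, ← Finset.sum_mul]
    have h2 : ∑ s ∈ Finset.range (l + 1), (if s < N then MM m s * ind (Es m s N x0) x else 0)
        ≤ (MM m N : ℝ) ^ (-α) * Th m α N x0 x := by
      rw [Real.rpow_neg hNp.le, le_inv_mul_iff₀ (by positivity)]
      have h3 : ∑ s ∈ Finset.range (N + 1), MM m s * (MM m N : ℝ) ^ α * ind (Es m s N x0) x ≤
          Th m α N x0 x := by
        unfold Th
        refine Finset.single_le_sum (f := fun l => ∑ s ∈ Finset.range (l + 1),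
          MM m s * (MM m l : ℝ) ^ α * ind (Es m s l x0) x) (fun l _ => ?_) (by simp)
        apply Finset.sum_nonneg
        intro s _
        have hi := ind_nonneg (Es m s l x0) x
        positivity
      refine le_trans ?_ h3
      rw [← Finset.sum_filter, Finset.mul_sum]
      calc _ = ∑ s ∈ (Finset.range (l + 1)).filter (· < N),
            MM m s * (MM m N : ℝ) ^ α * ind (Es m s N x0) x := by
            apply Finset.sum_congr rfl
            intro s _
            ring
        _ ≤ _ := by
          apply Finset.sum_le_sum_of_subset_of_nonneg
          · intro s hs
            simp at hs ⊢
            omega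
          · intro s _ _
            have hi := ind_nonneg (Es m s N x0) x
            positivity
    have h4 : (∑ s ∈ Finset.range (l + 1), (MM m s : ℝ)) *
        (B * (MM m l : ℝ) ^ (-(1 - α)) * ind (cyl m N x0) x) ≤
        2 * B * (MM m l : ℝ) ^ α * ind (cyl m N x0) x := by
      have := sum_MM_le hm l
      have e2 : (MM m l : ℝ) * (MM m l : ℝ) ^ (-(1 - α)) = (MM m l : ℝ) ^ α := by
        rw [← e1]; field_simp
      calc _ ≤ (2 * MM m l) * (B * (MM m l : ℝ) ^ (-(1 - α)) * ind (cyl m N x0) x) := by gcongr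
        _ = 2 * B * ((MM m l : ℝ) * (MM m l : ℝ) ^ (-(1 - α))) * ind (cyl m N x0) x := by ring
        _ = _ := by rw [e2]
    have h5 : 0 ≤ (MM m l : ℝ) ^ (-(1 - α)) := by positivity
    nlinarith

lemma double_le {α : ℝ} (hα0 : 0 < α) (hα1 : α < 1) (hm : ∀ n, 2 ≤ m n) {B : ℕ}
    (hB : ∀ n, m n ≤ B) (hμ : ∀ (n : ℕ) (x : G m), μ (cyl m n x) = ((MM m n : ℝ≥0∞))⁻¹)
    (J N : ℕ) (hNJ : N ≤ J) (x x0 : G m) :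
    ∑ l ∈ Finset.range (J + 1), ∑ s ∈ Finset.range (l + 1),
        MM m s * (MM m l : ℝ) ^ α * μ.real (Es m s l x ∩ cyl m N x0) ≤
    (1 + Cg (1 - α)) * (((MM m N : ℝ))⁻¹ * Th m α N x0 x)
    + 2 * B * Cg α * (MM m J : ℝ) ^ α * ind (cyl m N x0) x := by
  refine (Finset.sum_le_sum (fun l _ => inner_le (α := α) hm hB hμ l N x x0)).trans ?_
  rw [Finset.sum_add_distrib, Finset.sum_add_distrib, ← Finset.sum_mul, ← Finset.sum_mul,
    ← Finset.mul_sum, ← Finset.sum_filter, ← Finset.sum_mul]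
  have e1 : (Finset.range (J + 1)).filter (fun l => l ≤ N) = Finset.range (N + 1) := by
    ext l; simp; omega
  rw [e1]
  have hTh : 0 ≤ Th m α N x0 x := by
    unfold Th
    apply Finset.sum_nonneg
    intro l _
    apply Finset.sum_nonneg
    intro s _
    have hi := ind_nonneg (Es m s l x0) x
    positivity
  have hNp := MM_posR hm N
  have h1 := geom2 hm (show 0 < 1 - α by linarith) N J
  have h2 := geom1 hm hα0 J
  have hind := ind_nonneg (cyl m N x0) x
  have h3 := mul_le_mul_of_nonneg_right h1
    (show 0 ≤ (MM m N : ℝ) ^ (-α) * Th m α N x0 x by positivity)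
  have e2 : Cg (1 - α) * (MM m N : ℝ) ^ (-(1 - α)) * ((MM m N : ℝ) ^ (-α) * Th m α N x0 x) =
      Cg (1 - α) * (((MM m N : ℝ))⁻¹ * Th m α N x0 x) := by
    have : (MM m N : ℝ) ^ (-(1 - α)) * (MM m N : ℝ) ^ (-α) = ((MM m N : ℝ))⁻¹ := by
      rw [← Real.rpow_add hNp, ← Real.rpow_neg_one]; ring_nf
    rw [← this]; ring
  rw [e2] at h3
  have h4 : 2 * B * (∑ l ∈ Finset.range (J + 1), (MM m l : ℝ) ^ α) * ind (cyl m N x0) x ≤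
      2 * B * (Cg α * (MM m J : ℝ) ^ α) * ind (cyl m N x0) x := by gcongr
  have e3 : (∑ l ∈ Finset.range (N + 1), ∑ s ∈ Finset.range (l + 1),
        MM m s * (MM m l : ℝ) ^ α * ind (Es m s l x0) x) = Th m α N x0 x := rfl
  rw [e3]
  linarith

/-- Convolution with the Cesàro kernel. -/
def sg (m : ℕ → ℕ) (α : ℝ) (μ : Measure (G m)) (n : ℕ) (b : G m → ℂ) (x : G m) : ℂ :=
  ∫ t, b t * Ck m α n (x - t) ∂μ

/-- the constant in the pointwise estimate -/
def C1 (α : ℝ) (B : ℕ) : ℝ := (α⁻¹ + 2) * B ^ 2 * (1 + Cg (1 - α) + 2 * B * Cg α)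

lemma exists_J (hm : ∀ n, 2 ≤ m n) {n : ℕ} (hn : 1 ≤ n) : ∃ J, MM m J ≤ n ∧ n < MM m (J + 1) := by
  have h : ∃ J, n < MM m (J + 1) := ⟨n, lt_of_lt_of_le (lt_MM hm n) (MM_mono hm (Nat.le_succ n))⟩
  classical
  refine ⟨Nat.find h, ?_, Nat.find_spec h⟩
  rcases hJ : Nat.find h with _ | J
  · simpa [MM] using hn
  · by_contra hc
    exact Nat.find_min h (show J < Nat.find h by omega) (by omega)

lemma sg_point {α : ℝ} (hα0 : 0 < α) (hα1 : α < 1) (hm : ∀ n, 2 ≤ m n) {B : ℕ}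
    (hB : ∀ n, m n ≤ B) (hμ : ∀ (n : ℕ) (x : G m), μ (cyl m n x) = ((MM m n : ℝ≥0∞))⁻¹)
    {n N : ℕ} (hn : MM m N ≤ n) (x0 : G m) (b : G m → ℂ) (lam : ℝ)
    (hb : ∀ t, ‖b t‖ ≤ lam) (hb0 : ∀ t, t ∉ cyl m N x0 → b t = 0) (x : G m) :
    ‖sg m α μ n b x‖ ≤ lam * C1 α B *
      (ind (cyl m N x0) x + (n : ℝ) ^ (-α) * ((MM m N : ℝ)⁻¹ * Th m α N x0 x)) := by
  have hn1 : 1 ≤ n := le_trans (MM_pos hm N) hn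
  have hnp : (0 : ℝ) < n := by exact_mod_cast hn1
  have hlam : 0 ≤ lam := (norm_nonneg _).trans (hb x)
  obtain ⟨J, hJ1, hJ2⟩ := exists_J hm hn1
  have hNJ : N ≤ J := by
    by_contra h
    have := MM_mono hm (show J + 1 ≤ N by omega)
    omega
  set c0 := (α⁻¹ + 2) * (B : ℝ) ^ 2 with hc0
  have hc0p : 0 ≤ c0 := by positivity
  have hCg1 := Cg_ge_one (show 0 < 1 - α by linarith)
  have hCg2 := Cg_ge_one hα0
  let g : G m → ℝ := fun t => lam * (c0 * (n : ℝ) ^ (-α)) *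
      ∑ l ∈ Finset.range (J + 1), ∑ s ∈ Finset.range (l + 1),
        MM m s * (MM m l : ℝ) ^ α * (Es m s l x ∩ cyl m N x0).indicator (fun _ => (1 : ℝ)) t
  have hmeas : ∀ s l, MeasurableSet (Es m s l x ∩ cyl m N x0) := fun s l =>
    (measurableSet_Es s l x).inter (measurableSet_cyl N x0)
  have hint : ∀ s l, Integrable ((Es m s l x ∩ cyl m N x0).indicator (fun _ => (1 : ℝ))) μ :=
    fun s l => (integrable_const 1).indicator (hmeas s l)
  have hg : Integrable g μ := by
    apply Integrable.const_mul
    apply integrable_finsetSum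
    intro l _
    apply integrable_finsetSum
    intro s _
    exact (hint s l).const_mul _
  have hle : ∀ t, ‖b t * Ck m α n (x - t)‖ ≤ g t := by
    intro t
    by_cases ht : t ∈ cyl m N x0
    · rw [norm_mul]
      have h1 := Ck_sum hα0 hα1 hm hB hn1 hJ2 x t
      have e : g t = lam * (c0 * (n : ℝ) ^ (-α) * ∑ l ∈ Finset.range (J + 1),
          ∑ s ∈ Finset.range (l + 1), MM m s * (MM m l : ℝ) ^ α * ind (Es m s l x) t) := by
        simp only [g]
        rw [mul_assoc lam]
        congr 2
        apply Finset.sum_congr rfl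
        intro l _
        apply Finset.sum_congr rfl
        intro s _
        congr 1
        by_cases h : t ∈ Es m s l x
        · rw [ind_of_mem h, Set.indicator_of_mem (show t ∈ Es m s l x ∩ cyl m N x0 from ⟨h, ht⟩)]
        · rw [ind_of_notMem h, Set.indicator_of_notMem (fun h' => h h'.1)]
      rw [e]
      exact mul_le_mul (hb t) h1 (norm_nonneg _) hlam
    · rw [hb0 t ht, zero_mul, norm_zero]
      simp only [g]
      have : ∀ l s, (0 : ℝ) ≤
          (Es m s l x ∩ cyl m N x0).indicator (fun _ => (1 : ℝ)) t := fun l s =>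
        Set.indicator_nonneg (fun _ _ => zero_le_one) t
      apply mul_nonneg (by positivity)
      apply Finset.sum_nonneg
      intro l _
      apply Finset.sum_nonneg
      intro s _
      have := this l s
      positivity
  have h2 : ‖sg m α μ n b x‖ ≤ ∫ t, g t ∂μ :=
    norm_integral_le_of_norm_le hg (Filter.Eventually.of_forall hle)
  have e3 : ∫ t, g t ∂μ = lam * (c0 * (n : ℝ) ^ (-α)) *
      ∑ l ∈ Finset.range (J + 1), ∑ s ∈ Finset.range (l + 1),
        MM m s * (MM m l : ℝ) ^ α * μ.real (Es m s l x ∩ cyl m N x0) := by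
    simp only [g]
    rw [integral_const_mul, integral_finsetSum]
    · congr 1
      apply Finset.sum_congr rfl
      intro l _
      rw [integral_finsetSum]
      · apply Finset.sum_congr rfl
        intro s _
        rw [integral_const_mul, integral_indicator_const _ (hmeas s l)]
        simp
      · intro s _
        exact (hint s l).const_mul _
    · intro l _
      apply integrable_finsetSum
      intro s _
      exact (hint s l).const_mul _
  rw [e3] at h2
  refine h2.trans ?_
  have h4 := double_le hα0 hα1 hm hB hμ J N hNJ x x0
  have hTh : 0 ≤ ((MM m N : ℝ))⁻¹ * Th m α N x0 x := by
    unfold Th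
    apply mul_nonneg (by positivity)
    apply Finset.sum_nonneg
    intro l _
    apply Finset.sum_nonneg
    intro s _
    have hi := ind_nonneg (Es m s l x0) x
    positivity
  have hind := ind_nonneg (cyl m N x0) x
  have h5 : (n : ℝ) ^ (-α) * (MM m J : ℝ) ^ α ≤ 1 := by
    rw [Real.rpow_neg hnp.le, inv_mul_le_iff₀ (by positivity), mul_one]
    have : (MM m J : ℝ) ≤ n := by exact_mod_cast hJ1
    gcongr
  have hnα : 0 ≤ (n : ℝ) ^ (-α) := by positivity
  set T := ((MM m N : ℝ))⁻¹ * Th m α N x0 x with hT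
  set I := ind (cyl m N x0) x with hI
  calc _ ≤ lam * (c0 * (n : ℝ) ^ (-α)) *
        ((1 + Cg (1 - α)) * T + 2 * B * Cg α * (MM m J : ℝ) ^ α * I) := by gcongr
    _ = lam * c0 * ((1 + Cg (1 - α)) * ((n : ℝ) ^ (-α) * T) +
        2 * B * Cg α * I * ((n : ℝ) ^ (-α) * (MM m J : ℝ) ^ α)) := by ring
    _ ≤ lam * c0 * ((1 + Cg (1 - α) + 2 * B * Cg α) * ((n : ℝ) ^ (-α) * T) +
        (1 + Cg (1 - α) + 2 * B * Cg α) * I) := by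
      apply mul_le_mul_of_nonneg_left _ (by positivity)
      apply add_le_add
      · apply mul_le_mul_of_nonneg_right _ (by positivity)
        have : 0 ≤ 2 * B * Cg α := by positivity
        linarith
      · calc _ ≤ 2 * B * Cg α * I * 1 := by gcongr
          _ ≤ _ := by
            rw [mul_one]
            apply mul_le_mul_of_nonneg_right _ hind
            linarith
    _ = _ := by unfold C1; ring

end measure

section atoms

variable {m : ℕ → ℕ}

lemma rpow_sum_le_real {ι : Type*} (S : Finset ι) (a : ι → ℝ) (ha : ∀ i ∈ S, 0 ≤ a i) {p : ℝ}
    (hp0 : 0 < p) (hp1 : p ≤ 1) : (∑ i ∈ S, a i) ^ p ≤ ∑ i ∈ S, a i ^ p := by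
  classical
  induction S using Finset.induction_on with
  | empty => simp [Real.zero_rpow hp0.ne']
  | insert i S hi ih =>
    rw [Finset.sum_insert hi, Finset.sum_insert hi]
    have h1 := ih (fun j hj => ha j (Finset.mem_insert_of_mem hj))
    have h2 := Real.rpow_add_le_add_rpow (ha i (Finset.mem_insert_self _ _))
      (Finset.sum_nonneg (fun j hj => ha j (Finset.mem_insert_of_mem hj))) hp0.le hp1
    linarith

lemma ind_eq {X : Type*} (S : Set X) : ind S = S.indicator (fun _ => (1 : ℝ)) := by
  ext t
  by_cases h : t ∈ S
  · rw [ind_of_mem h, Set.indicator_of_mem h]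
  · rw [ind_of_notMem h, Set.indicator_of_notMem h]

lemma ind_rpow {X : Type*} (S : Set X) (t : X) {p : ℝ} (hp0 : 0 < p) : ind S t ^ p = ind S t := by
  by_cases h : t ∈ S
  · rw [ind_of_mem h, Real.one_rpow]
  · rw [ind_of_notMem h, Real.zero_rpow hp0.ne']

variable {μ : Measure (G m)} [IsProbabilityMeasure μ]

lemma integrable_ind {S : Set (G m)} (hS : MeasurableSet S) : Integrable (ind S) μ := by
  rw [ind_eq]
  exact (integrable_const 1).indicator hS

lemma integral_ind {S : Set (G m)} (hS : MeasurableSet S) : ∫ t, ind S t ∂μ = μ.real S := by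
  rw [ind_eq, integral_indicator_const _ hS]
  simp

lemma sg_lp {α : ℝ} (hα0 : 0 < α) (hα1 : α < 1) (hm : ∀ n, 2 ≤ m n) {B : ℕ}
    (hB : ∀ n, m n ≤ B) (hμ : ∀ (n : ℕ) (x : G m), μ (cyl m n x) = ((MM m n : ℝ≥0∞))⁻¹)
    {p : ℝ} (hp0 : 0 < p) (hp1 : p < 1) (hαp : α * p = 1 - p)
    {n N : ℕ} (hn : MM m N ≤ n) (x0 : G m) (b : G m → ℂ) (lam : ℝ)
    (hb : ∀ t, ‖b t‖ ≤ lam) (hb0 : ∀ t, t ∉ cyl m N x0 → b t = 0) :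
    ∫⁻ x, (‖sg m α μ n b x‖₊ : ℝ≥0∞) ^ p ∂μ ≤
      ENNReal.ofReal ((lam * C1 α B) ^ p * (MM m N : ℝ)⁻¹ *
        (1 + B * Cg p * (N + 1) * ((MM m N : ℝ) ^ (1 - p) * (n : ℝ) ^ (-(1 - p))))) := by
  have hlam : 0 ≤ lam := (norm_nonneg _).trans (hb x0)
  have hCg1 := Cg_ge_one (show 0 < 1 - α by linarith)
  have hCg2 := Cg_ge_one hα0
  have hCgp := Cg_ge_one hp0
  have hC1 : 0 ≤ C1 α B := by unfold C1; positivity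
  have hMN := MM_posR hm N
  have hn1 : 1 ≤ n := le_trans (MM_pos hm N) hn
  have hnp : (0 : ℝ) < n := by exact_mod_cast hn1
  set W := (n : ℝ) ^ (-α) * (MM m N : ℝ)⁻¹ with hW
  have hW0 : 0 ≤ W := by positivity
  let g : G m → ℝ := fun x => (lam * C1 α B) ^ p * (ind (cyl m N x0) x +
    ∑ l ∈ Finset.range (N + 1), ∑ s ∈ Finset.range (l + 1),
        (W * (MM m s * (MM m l : ℝ) ^ α)) ^ p * ind (Es m s l x0) x)
  have hnn : ∀ x s l, 0 ≤ (W * (MM m s * (MM m l : ℝ) ^ α)) * ind (Es m s l x0) x := by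
    intro x s l
    have := ind_nonneg (Es m s l x0) x
    positivity
  have hgl : ∀ x, ‖sg m α μ n b x‖ ^ p ≤ g x := by
    intro x
    have h1 := sg_point hα0 hα1 hm hB hμ hn x0 b lam hb hb0 x
    have hind := ind_nonneg (cyl m N x0) x
    have e : (n : ℝ) ^ (-α) * ((MM m N : ℝ)⁻¹ * Th m α N x0 x) =
        ∑ l ∈ Finset.range (N + 1), ∑ s ∈ Finset.range (l + 1),
        (W * (MM m s * (MM m l : ℝ) ^ α)) * ind (Es m s l x0) x := by
      rw [← mul_assoc, Th, Finset.mul_sum]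
      apply Finset.sum_congr rfl
      intro l _
      rw [Finset.mul_sum]
      apply Finset.sum_congr rfl
      intro s _
      ring
    rw [e] at h1
    have hs0 : 0 ≤ ∑ l ∈ Finset.range (N + 1), ∑ s ∈ Finset.range (l + 1),
        (W * (MM m s * (MM m l : ℝ) ^ α)) * ind (Es m s l x0) x :=
      Finset.sum_nonneg (fun l _ => Finset.sum_nonneg (fun s _ => hnn x s l))
    calc ‖sg m α μ n b x‖ ^ p ≤ _ := Real.rpow_le_rpow (norm_nonneg _) h1 hp0.le
      _ = (lam * C1 α B) ^ p * (ind (cyl m N x0) x + ∑ l ∈ Finset.range (N + 1),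
          ∑ s ∈ Finset.range (l + 1),
          (W * (MM m s * (MM m l : ℝ) ^ α)) * ind (Es m s l x0) x) ^ p := by
        rw [Real.mul_rpow (by positivity) (by positivity)]
      _ ≤ g x := by
        apply mul_le_mul_of_nonneg_left _ (by positivity)
        refine (Real.rpow_add_le_add_rpow hind hs0 hp0.le hp1.le).trans ?_
        rw [ind_rpow _ _ hp0]
        gcongr
        refine (rpow_sum_le_real _ _
          (fun l _ => Finset.sum_nonneg (fun s _ => hnn x s l)) hp0 hp1.le).trans ?_
        apply Finset.sum_le_sum
        intro l _
        refine (rpow_sum_le_real _ _ (fun s _ => hnn x s l) hp0 hp1.le).trans ?_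
        apply Finset.sum_le_sum
        intro s _
        rw [Real.mul_rpow (by positivity) (ind_nonneg _ _), ind_rpow _ _ hp0]
  have hint2 : ∀ l, Integrable (fun x => ∑ s ∈ Finset.range (l + 1),
        (W * (MM m s * (MM m l : ℝ) ^ α)) ^ p * ind (Es m s l x0) x) μ := by
    intro l
    apply integrable_finsetSum
    intro s _
    exact (integrable_ind (measurableSet_Es s l x0)).const_mul _
  have hint1 : Integrable (fun x => ∑ l ∈ Finset.range (N + 1), ∑ s ∈ Finset.range (l + 1),
        (W * (MM m s * (MM m l : ℝ) ^ α)) ^ p * ind (Es m s l x0) x) μ :=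
    integrable_finsetSum _ (fun l _ => hint2 l)
  have hcyl : Integrable (ind (cyl m N x0)) μ := integrable_ind (measurableSet_cyl N x0)
  have hg : Integrable g μ := (hcyl.add hint1).const_mul _
  have hg0 : ∀ x, 0 ≤ g x := fun x => (by positivity : 0 ≤ ‖sg m α μ n b x‖ ^ p).trans (hgl x)
  calc ∫⁻ x, (‖sg m α μ n b x‖₊ : ℝ≥0∞) ^ p ∂μ ≤ ∫⁻ x, ENNReal.ofReal (g x) ∂μ := by
        apply lintegral_mono
        intro x
        have : (‖sg m α μ n b x‖₊ : ℝ≥0∞) ^ p = ENNReal.ofReal (‖sg m α μ n b x‖ ^ p) := by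
          rw [← ENNReal.ofReal_rpow_of_nonneg (norm_nonneg _) hp0.le, ofReal_norm_eq_enorm]
          rfl
        simp only [this]
        exact ENNReal.ofReal_le_ofReal (hgl x)
    _ = ENNReal.ofReal (∫ x, g x ∂μ) :=
        (ofReal_integral_eq_lintegral_ofReal hg (Filter.Eventually.of_forall hg0)).symm
    _ ≤ _ := by
      apply ENNReal.ofReal_le_ofReal
      simp only [g]
      rw [integral_const_mul, integral_add hcyl hint1, integral_ind (measurableSet_cyl N x0),
        real_cyl hμ, integral_finsetSum _ (fun l _ => hint2 l), mul_assoc]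
      apply mul_le_mul_of_nonneg_left _ (by positivity)
      have h1 : ∀ l ∈ Finset.range (N + 1), ∫ x, ∑ s ∈ Finset.range (l + 1),
          (W * (MM m s * (MM m l : ℝ) ^ α)) ^ p * ind (Es m s l x0) x ∂μ ≤ W ^ p * (B * Cg p) := by
        intro l _
        have hl := MM_posR hm l
        rw [integral_finsetSum _
          (fun s _ => (integrable_ind (measurableSet_Es s l x0)).const_mul _)]
        calc _ ≤ ∑ s ∈ Finset.range (l + 1),
              (MM m s : ℝ) ^ p * (W ^ p * (MM m l : ℝ) ^ (α * p) * (B * (MM m l : ℝ)⁻¹)) := by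
              apply Finset.sum_le_sum
              intro s _
              rw [integral_const_mul, integral_ind (measurableSet_Es s l x0),
                Real.mul_rpow hW0 (by positivity), Real.mul_rpow (x := (MM m s : ℝ)) (y := (MM m l : ℝ) ^ α) (by positivity) (by positivity),
                ← Real.rpow_mul hl.le]
              have := real_Es_le hm hB hμ s l x0
              calc _ ≤ W ^ p * ((MM m s : ℝ) ^ p * (MM m l : ℝ) ^ (α * p)) *
                    (B * (MM m l : ℝ)⁻¹) := by gcongr
                _ = _ := by ring
          _ ≤ (Cg p * (MM m l : ℝ) ^ p) * (W ^ p * (MM m l : ℝ) ^ (α * p) *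
              (B * (MM m l : ℝ)⁻¹)) := by
              rw [← Finset.sum_mul]
              have := geom1 hm hp0 l
              gcongr
          _ = W ^ p * (B * Cg p) *
              ((MM m l : ℝ) ^ p * (MM m l : ℝ) ^ (α * p) * (MM m l : ℝ)⁻¹) := by ring
          _ = _ := by
            rw [← Real.rpow_add hl, hαp, show p + (1 - p) = 1 by ring, Real.rpow_one,
              mul_inv_cancel₀ hl.ne', mul_one]
      have h2 := Finset.sum_le_sum h1
      rw [Finset.sum_const, nsmul_eq_mul, Finset.card_range] at h2
      have e2 : W ^ p = (MM m N : ℝ)⁻¹ * ((MM m N : ℝ) ^ (1 - p) * (n : ℝ) ^ (-(1 - p))) := by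
        rw [hW, Real.mul_rpow (by positivity) (by positivity), ← Real.rpow_mul hnp.le, neg_mul, hαp,
          ← Real.rpow_neg_one, ← Real.rpow_mul hMN.le, ← mul_assoc, ← Real.rpow_add hMN, mul_comm]
        ring_nf
      rw [e2] at h2
      push_cast at h2
      linarith

lemma tail_sum {e : ℝ} (he0 : 0 < e) (he1 : e < 1) (M R : ℕ) (hM : 1 ≤ M) (hR : M ≤ R) :
    ∑ k ∈ Finset.Icc M R, (k : ℝ) ^ (-e) / k ≤ (1 + e⁻¹) * (M : ℝ) ^ (-e) - e⁻¹ * (R : ℝ) ^ (-e) := by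
  induction R, hR using Nat.le_induction with
  | base =>
    have h1 : (1 : ℝ) ≤ M := by exact_mod_cast hM
    have h2 : (0 : ℝ) < (M : ℝ) ^ (-e) := by positivity
    simp only [Finset.Icc_self, Finset.sum_singleton]
    have := div_le_self h2.le h1
    linarith
  | succ R hR ih =>
    rw [Finset.sum_Icc_succ_top (by omega)]
    have hR1 : (1 : ℝ) ≤ R := by exact_mod_cast (hM.trans hR)
    have hx : (0 : ℝ) < (R : ℝ) + 1 := by linarith
    have h0 := rpow_aux2 he0 he1 R
    push_cast
    set u := ((R : ℝ) + 1) ^ e with hu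
    set v := (R : ℝ) ^ e with hv
    have hup : 0 < u := by positivity
    have hvp : 0 < v := by positivity
    rw [Real.rpow_sub_one hx.ne', ← hu, le_inv_mul_iff₀ he0] at h0
    rw [Real.rpow_neg hx.le, ← hu]
    rw [Real.rpow_neg (by positivity) (x := (R : ℝ)), ← hv] at ih
    suffices h : e * (u⁻¹ / ((R : ℝ) + 1)) ≤ v⁻¹ - u⁻¹ by
      rw [← le_inv_mul_iff₀ he0] at h
      linarith
    have huv : v ≤ u := by rw [hu, hv]; gcongr; linarith
    have h5 : e * (u⁻¹ / ((R : ℝ) + 1)) = (e * (u / ((R : ℝ) + 1))) / (u * u) := by field_simp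
    have h6 : v⁻¹ - u⁻¹ = (u - v) / (v * u) := by field_simp
    rw [h5, h6]
    have h7 : 0 ≤ u - v := by linarith
    gcongr

/-- The strong-summability functional. -/
def TT (m : ℕ → ℕ) (α : ℝ) (μ : Measure (G m)) (p : ℝ) (R : ℕ) (b : G m → ℂ) : ℝ≥0∞ :=
  ∑ k ∈ Finset.Icc 1 R, (∫⁻ x, (‖sg m α μ k b x‖₊ : ℝ≥0∞) ^ p ∂μ) / (k : ℝ≥0∞)

lemma D_congr (hm : ∀ n, 2 ≤ m n) {k N : ℕ} (hk : k ≤ MM m N) {x y : G m}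
    (hxy : ∀ j < N, x j = y j) : D m k x = D m k y := by
  unfold D
  apply Finset.sum_congr rfl
  intro i hi
  have : i < k := by simpa using hi
  exact psi_congr hm (by omega) hxy

lemma Ck_congr {α : ℝ} (hm : ∀ n, 2 ≤ m n) {n N : ℕ} (hn : n ≤ MM m N) {x y : G m}
    (hxy : ∀ j < N, x j = y j) : Ck m α n x = Ck m α n y := by
  unfold Ck cs
  congr 1
  apply Finset.sum_congr rfl
  intro k hk
  have : k ≤ n := (Finset.mem_Icc.mp hk).2
  simp only [D_congr hm (this.trans hn) hxy]

lemma sg_eq_zero {α : ℝ} (hm : ∀ n, 2 ≤ m n) {n N : ℕ} (hn : n ≤ MM m N) (x0 : G m)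
    (b : G m → ℂ) (hb0 : ∀ t, t ∉ cyl m N x0 → b t = 0) (hbi : ∫ t, b t ∂μ = 0) (x : G m) :
    sg m α μ n b x = 0 := by
  unfold sg
  have : ∀ t, b t * Ck m α n (x - t) = b t * Ck m α n (x - x0) := by
    intro t
    by_cases ht : t ∈ cyl m N x0
    · rw [Ck_congr hm hn (x := x - t) (y := x - x0)]
      intro j hj
      simp only [Pi.sub_apply, ht j hj]
    · simp [hb0 t ht]
  simp_rw [this]
  rw [integral_mul_const, hbi, zero_mul]

/-- constant for atoms -/
def C5 (α p : ℝ) (B : ℕ) : ℝ := (C1 α B) ^ p * (3 + 4 * B * Cg p * (1 + (1 - p)⁻¹))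

lemma TT_atom {α : ℝ} (hα0 : 0 < α) (hα1 : α < 1) (hm : ∀ n, 2 ≤ m n) {B : ℕ}
    (hB : ∀ n, m n ≤ B) (hμ : ∀ (n : ℕ) (x : G m), μ (cyl m n x) = ((MM m n : ℝ≥0∞))⁻¹)
    {p : ℝ} (hp0 : 0 < p) (hp1 : p < 1) (hαp : α * p = 1 - p)
    {N R : ℕ} (hR : 2 ≤ R) (x0 : G m) (b : G m → ℂ) (lam : ℝ)
    (hb : ∀ t, ‖b t‖ ≤ lam) (hb0 : ∀ t, t ∉ cyl m N x0 → b t = 0)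
    (hbi : ∫ t, b t ∂μ = 0 ∨ N = 0) :
    TT m α μ p R b ≤ ENNReal.ofReal (C5 α p B * Real.log R * lam ^ p * (MM m N : ℝ)⁻¹) := by
  have hlam : 0 ≤ lam := (norm_nonneg _).trans (hb x0)
  have hCg1 := Cg_ge_one (show 0 < 1 - α by linarith)
  have hCg2 := Cg_ge_one hα0
  have hCgp := Cg_ge_one hp0
  have hC1 : 0 ≤ C1 α B := by unfold C1; positivity
  have hMN := MM_posR hm N
  have hMN1 := MM_pos hm N
  set V := (lam * C1 α B) ^ p * (MM m N : ℝ)⁻¹ with hV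
  have hV0 : 0 ≤ V := by positivity
  set Z := B * Cg p * ((N : ℝ) + 1) * (MM m N : ℝ) ^ (1 - p) with hZ
  have hZ0 : 0 ≤ Z := by positivity
  have hterm : ∀ k ∈ Finset.Icc 1 R,
      (∫⁻ x, (‖sg m α μ k b x‖₊ : ℝ≥0∞) ^ p ∂μ) / (k : ℝ≥0∞) ≤
      ENNReal.ofReal (if MM m N ≤ k then V * (1 / k + Z * ((k : ℝ) ^ (-(1 - p)) / k)) else 0) := by
    intro k hk
    have hk1 : 1 ≤ k := (Finset.mem_Icc.mp hk).1
    have hkp : (0 : ℝ) < k := by exact_mod_cast hk1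
    split_ifs with h
    · have h1 := sg_lp hα0 hα1 hm hB hμ hp0 hp1 hαp h x0 b lam hb hb0
      calc _ ≤ _ := ENNReal.div_le_div_right h1 _
        _ = _ := by
          rw [← ENNReal.ofReal_natCast k, ← ENNReal.ofReal_div_of_pos hkp]
          congr 1
          rw [← hV, hZ]
          ring
    · have h2 : ∫ t, b t ∂μ = 0 := by
        rcases hbi with h3 | h3
        · exact h3
        · subst h3
          simp [MM] at h
          omega
      have : ∀ x, sg m α μ k b x = 0 :=
        sg_eq_zero hm (by omega : k ≤ MM m N) x0 b hb0 h2
      simp [this, hp0]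
  unfold TT
  refine (Finset.sum_le_sum hterm).trans ?_
  rw [← ENNReal.ofReal_sum_of_nonneg]
  swap
  · intro k _
    split_ifs
    · positivity
    · exact le_rfl
  apply ENNReal.ofReal_le_ofReal
  have hlog2 : (0.69 : ℝ) < Real.log 2 := by linarith [Real.log_two_gt_d9]
  have hlogR : Real.log 2 ≤ Real.log R := Real.log_le_log (by norm_num) (by exact_mod_cast hR)
  have hlogR0 : 0 ≤ Real.log R := by linarith
  rcases lt_or_ge R (MM m N) with hRM | hRM
  · rw [Finset.sum_eq_zero]
    · unfold C5
      have : 0 < 1 - p := by linarith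
      positivity
    · intro k hk
      have := (Finset.mem_Icc.mp hk).2
      rw [if_neg (by omega)]
  have h1 : ∑ k ∈ Finset.Icc 1 R,
      (if MM m N ≤ k then V * (1 / (k : ℝ) + Z * ((k : ℝ) ^ (-(1 - p)) / k)) else 0) ≤
      V * (∑ k ∈ Finset.Icc 1 R, 1 / (k : ℝ) +
        Z * ∑ k ∈ Finset.Icc (MM m N) R, ((k : ℝ) ^ (-(1 - p)) / k)) := by
    rw [← Finset.sum_filter]
    have e1 : (Finset.Icc 1 R).filter (fun k => MM m N ≤ k) = Finset.Icc (MM m N) R := by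
      ext k; simp; omega
    rw [e1, ← Finset.mul_sum, Finset.sum_add_distrib, ← Finset.mul_sum]
    gcongr
    exact hMN1
  refine h1.trans ?_
  have h2 : ∑ k ∈ Finset.Icc 1 R, 1 / (k : ℝ) ≤ 3 * Real.log R := by
    have := harmonic_le_one_add_log R
    rw [harmonic_eq_sum_Icc] at this
    push_cast at this
    simp only [one_div]
    linarith
  have h3 := tail_sum (e := 1 - p) (by linarith) (by linarith) (MM m N) R hMN1 hRM
  have h4 : ∑ k ∈ Finset.Icc (MM m N) R, ((k : ℝ) ^ (-(1 - p)) / k) ≤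
      (1 + (1 - p)⁻¹) * (MM m N : ℝ) ^ (-(1 - p)) := by
    have : 0 ≤ (1 - p)⁻¹ * (R : ℝ) ^ (-(1 - p)) := by
      have : 0 < 1 - p := by linarith
      positivity
    linarith
  have h5 : (N : ℝ) + 1 ≤ 4 * Real.log R := by
    have h6 : (2 : ℝ) ^ N ≤ R := by exact_mod_cast (MM_ge_two_pow hm N).trans hRM
    have h7 := Real.log_le_log (by positivity) h6
    rw [Real.log_pow] at h7
    have hN0 : (0 : ℝ) ≤ N := by positivity
    nlinarith
  have h1p : 0 < 1 - p := by linarith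
  calc _ ≤ V * (3 * Real.log R + Z * ((1 + (1 - p)⁻¹) * (MM m N : ℝ) ^ (-(1 - p)))) := by gcongr
    _ = V * (3 * Real.log R + B * Cg p * ((N : ℝ) + 1) * (1 + (1 - p)⁻¹) *
        ((MM m N : ℝ) ^ (1 - p) * (MM m N : ℝ) ^ (-(1 - p)))) := by rw [hZ]; ring
    _ = V * (3 * Real.log R + B * Cg p * ((N : ℝ) + 1) * (1 + (1 - p)⁻¹)) := by
      rw [← Real.rpow_add hMN]; simp
    _ ≤ V * (3 * Real.log R + B * Cg p * (4 * Real.log R) * (1 + (1 - p)⁻¹)) := by gcongr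
    _ = _ := by
      rw [hV, Real.mul_rpow hlam hC1]; unfold C5; ring

end atoms

section subadd

variable {m : ℕ → ℕ} {μ : Measure (G m)} [IsProbabilityMeasure μ]

lemma measurable_rade (k : ℕ) : Measurable (rade m k) := by
  have h : Measurable (fun a : ZMod (m k) =>
      Complex.exp (2 * Real.pi * Complex.I * (a.val : ℂ) / (m k : ℂ))) := measurable_from_top
  exact h.comp (measurable_pi_apply k)

lemma measurable_psi (n : ℕ) : Measurable (psi m n) := by
  have : psi m n = fun x => ∏ k ∈ Finset.range (n + 1), rade m k x ^ (n / MM m k % m k) := rfl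
  rw [this]
  exact Finset.measurable_prod _ (fun k _ => (measurable_rade k).pow_const _)

lemma integrable_mul_psi (hm : ∀ n, 2 ≤ m n) {g : G m → ℂ} (hg : Integrable g μ) (i : ℕ) :
    Integrable (fun t => g t * (starRingEnd ℂ) (psi m i t)) μ := by
  apply hg.mul_bdd (c := 1)
  · exact (Complex.continuous_conj.measurable.comp (measurable_psi i)).aestronglyMeasurable
  · refine Filter.Eventually.of_forall (fun t => ?_)
    simp [norm_psi hm]

lemma sg_eq (hm : ∀ n, 2 ≤ m n) {α : ℝ} {g : G m → ℂ} (hg : Integrable g μ) (n : ℕ) (x : G m) :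
    sg m α μ n g x = ((AC α n : ℝ) : ℂ)⁻¹ * ∑ k ∈ Finset.Icc 1 n,
      ((AC (α - 1) (n - k) : ℝ) : ℂ) * fS m μ g k x := by
  unfold sg Ck cs
  have e : ∀ t, g t * (((AC α n : ℝ) : ℂ)⁻¹ * ∑ k ∈ Finset.Icc 1 n,
      ((AC (α - 1) (n - k) : ℝ) : ℂ) * D m k (x - t)) =
      ((AC α n : ℝ) : ℂ)⁻¹ * ∑ k ∈ Finset.Icc 1 n, ((AC (α - 1) (n - k) : ℝ) : ℂ) *
        ∑ i ∈ Finset.range k, (g t * (starRingEnd ℂ) (psi m i t)) * psi m i x := by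
    intro t
    rw [mul_left_comm, Finset.mul_sum]
    congr 1
    apply Finset.sum_congr rfl
    intro k _
    rw [mul_left_comm]
    congr 1
    rw [D, Finset.mul_sum]
    apply Finset.sum_congr rfl
    intro i _
    rw [psi_sub hm]
    ring
  simp_rw [e]
  have hi : ∀ i, Integrable (fun t => (g t * (starRingEnd ℂ) (psi m i t)) * psi m i x) μ :=
    fun i => (integrable_mul_psi hm hg i).mul_const _
  have hi2 : ∀ k, Integrable (fun t => ∑ i ∈ Finset.range k,
      (g t * (starRingEnd ℂ) (psi m i t)) * psi m i x) μ :=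
    fun k => integrable_finsetSum _ (fun i _ => hi i)
  rw [integral_const_mul, integral_finsetSum _ (fun k _ => (hi2 k).const_mul _)]
  congr 1
  apply Finset.sum_congr rfl
  intro k _
  rw [integral_const_mul, integral_finsetSum _ (fun i _ => hi i)]
  congr 1
  unfold fS fcoef
  apply Finset.sum_congr rfl
  intro i _
  rw [integral_mul_const]

lemma measurable_sg (hm : ∀ n, 2 ≤ m n) {α : ℝ} {g : G m → ℂ} (hg : Integrable g μ) (n : ℕ) :
    Measurable (sg m α μ n g) := by
  have : sg m α μ n g = fun x => ((AC α n : ℝ) : ℂ)⁻¹ * ∑ k ∈ Finset.Icc 1 n,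
      ((AC (α - 1) (n - k) : ℝ) : ℂ) * fS m μ g k x := funext (fun x => sg_eq hm hg n x)
  rw [this]
  apply Measurable.const_mul
  apply Finset.measurable_sum
  intro k _
  apply Measurable.const_mul
  unfold fS
  apply Finset.measurable_sum
  intro i _
  exact (measurable_psi i).const_mul _

lemma sg_add (hm : ∀ n, 2 ≤ m n) {α : ℝ} {g h : G m → ℂ} (hg : Integrable g μ)
    (hh : Integrable h μ) (n : ℕ) (x : G m) :
    sg m α μ n (g + h) x = sg m α μ n g x + sg m α μ n h x := by
  rw [sg_eq hm hg, sg_eq hm hh, sg_eq hm (hg.add hh), ← mul_add, ← Finset.sum_add_distrib]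
  congr 1
  apply Finset.sum_congr rfl
  intro k _
  rw [← mul_add]
  congr 1
  unfold fS
  rw [← Finset.sum_add_distrib]
  apply Finset.sum_congr rfl
  intro i _
  rw [← add_mul]
  congr 1
  unfold fcoef
  rw [← integral_add (integrable_mul_psi hm hg i) (integrable_mul_psi hm hh i)]
  simp [add_mul]

lemma TT_add (hm : ∀ n, 2 ≤ m n) {α p : ℝ} (hp0 : 0 < p) (hp1 : p < 1) (R : ℕ) {g h : G m → ℂ}
    (hg : Integrable g μ) (hh : Integrable h μ) :
    TT m α μ p R (g + h) ≤ TT m α μ p R g + TT m α μ p R h := by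
  unfold TT
  rw [← Finset.sum_add_distrib]
  apply Finset.sum_le_sum
  intro k _
  rw [← ENNReal.add_div]
  apply ENNReal.div_le_div_right
  have hmeas : Measurable fun x => (‖sg m α μ k g x‖₊ : ℝ≥0∞) ^ p :=
    ((measurable_sg hm hg k).nnnorm.coe_nnreal_ennreal).pow_const _
  rw [← lintegral_add_left hmeas]
  apply lintegral_mono
  intro x
  simp only [sg_add hm hg hh]
  calc ((‖sg m α μ k g x + sg m α μ k h x‖₊ : ℝ≥0) : ℝ≥0∞) ^ p
      ≤ ((‖sg m α μ k g x‖₊ : ℝ≥0∞) + (‖sg m α μ k h x‖₊ : ℝ≥0∞)) ^ p := by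
        apply ENNReal.rpow_le_rpow _ hp0.le
        exact_mod_cast nnnorm_add_le _ _
    _ ≤ _ := ENNReal.rpow_add_le_add_rpow _ _ hp0.le hp1.le

lemma TT_zero {α p : ℝ} (hp0 : 0 < p) (R : ℕ) : TT m α μ p R 0 = 0 := by
  simp [TT, sg, hp0]

lemma TT_sum (hm : ∀ n, 2 ≤ m n) {α p : ℝ} (hp0 : 0 < p) (hp1 : p < 1) (R : ℕ) {ι : Type*}
    (s : Finset ι) (g : ι → G m → ℂ) (hg : ∀ i, Integrable (g i) μ) :
    TT m α μ p R (∑ i ∈ s, g i) ≤ ∑ i ∈ s, TT m α μ p R (g i) := by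
  classical
  induction s using Finset.induction_on with
  | empty => simp [TT_zero hp0]
  | insert a s ha ih =>
    rw [Finset.sum_insert ha, Finset.sum_insert ha]
    refine (TT_add hm hp0 hp1 R (hg a) ?_).trans (by gcongr)
    exact integrable_finsetSum' _ (fun i _ => hg i)

end subadd

section mart

variable {m : ℕ → ℕ} {μ : Measure (G m)} [IsProbabilityMeasure μ]

lemma filt_const {n : ℕ} {g : G m → ℂ} (hg : Measurable[filt m n] g) {x y : G m}
    (h : ∀ j < n, x j = y j) : g x = g y := by
  have h1 : MeasurableSet[filt m n] (g ⁻¹' {g x}) := hg (MeasurableSet.singleton _)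
  obtain ⟨s, _, hs⟩ := h1
  have hx : x ∈ g ⁻¹' {g x} := rfl
  rw [← hs] at hx
  have e : (fun (i : Fin n) => x i.val) = (fun (i : Fin n) => y i.val) :=
    funext (fun i => h i i.2)
  have hy : y ∈ g ⁻¹' {g x} := by
    rw [← hs]
    simp only [Set.mem_preimage] at hx ⊢
    rw [← e]; exact hx
  exact (Set.mem_singleton_iff.mp hy).symm

lemma cyl_filt {n k : ℕ} (hnk : n ≤ k) (x : G m) : MeasurableSet[filt m k] (cyl m n x) := by
  refine ⟨{z | ∀ i : Fin k, i.val < n → z i = x i.val}, ?_, ?_⟩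
  · have : {z : ∀ i : Fin k, ZMod (m i.val) | ∀ i : Fin k, i.val < n → z i = x i.val} =
        ⋂ i ∈ {i : Fin k | i.val < n}, {z | z i = x i.val} := by ext z; simp
    rw [this]
    refine MeasurableSet.biInter (Set.to_countable _) (fun i _ => ?_)
    have hmi : Measurable (fun z : ∀ i : Fin k, ZMod (m i.val) => z i) := measurable_pi_apply i
    exact hmi (MeasurableSet.singleton (x i.val))
  · ext y
    simp only [Set.mem_preimage, Set.mem_ofPred_eq, cyl]
    exact ⟨fun h j hj => h ⟨j, by omega⟩ hj, fun h i hi => h i hi⟩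

lemma cyl_integral {f : ℕ → G m → ℂ} (hf : IsMartingale m μ f) {j N : ℕ} (h : j ≤ N) (x : G m) :
    ∫ t in cyl m j x, f N t ∂μ = ∫ t in cyl m j x, f j t ∂μ := by
  induction N, h using Nat.le_induction with
  | base => rfl
  | succ N h ih => rw [hf.2.2 N _ (cyl_filt h x), ih]

/-- decomposition into children -/
lemma cyl_children (j : ℕ) (x : G m) [NeZero (m j)] :
    cyl m j x = ⋃ a ∈ (Finset.univ : Finset (ZMod (m j))),
      cyl m (j + 1) (Function.update x j a) := by
  ext t
  simp only [Set.mem_iUnion, Finset.mem_univ, exists_prop, true_and]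
  constructor
  · intro ht
    refine ⟨t j, fun i hi => ?_⟩
    by_cases h : i = j
    · subst h; simp
    · rw [Function.update_of_ne h]; exact ht i (by omega)
  · rintro ⟨a, ha⟩ i hi
    have := ha i (by omega)
    rwa [Function.update_of_ne (by omega)] at this

lemma children_disj (j : ℕ) (x : G m) :
    (Set.univ : Set (ZMod (m j))).PairwiseDisjoint
      (fun a => cyl m (j + 1) (Function.update x j a)) := by
  intro a _ b _ hab
  rw [Function.onFun, Set.disjoint_left]
  intro t h1 h2
  have e1 := h1 j (by omega)
  have e2 := h2 j (by omega)
  simp only [Function.update_self] at e1 e2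
  exact hab (e1.symm.trans e2)

lemma coef_step (hm : ∀ n, 2 ≤ m n) {f : ℕ → G m → ℂ} (hf : IsMartingale m μ f) {i N : ℕ}
    (hi : i < MM m N) : ∀ d, d ≤ N → ∀ x : G m,
    ∫ t in cyl m (N - d) x, f (N + 1) t * (starRingEnd ℂ) (psi m i t) ∂μ =
    ∫ t in cyl m (N - d) x, f N t * (starRingEnd ℂ) (psi m i t) ∂μ := by
  intro d
  induction d with
  | zero =>
    intro _ x
    have e : ∀ M, ∫ t in cyl m (N - 0) x, f M t * (starRingEnd ℂ) (psi m i t) ∂μ =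
        (∫ t in cyl m N x, f M t ∂μ) * (starRingEnd ℂ) (psi m i x) := by
      intro M
      rw [← integral_mul_const]
      apply setIntegral_congr_fun (measurableSet_cyl _ _)
      intro t ht
      simp only [psi_congr hm hi ht]
    rw [e, e, cyl_integral hf (Nat.le_succ N)]
  | succ d ih =>
    intro hd x
    have hs : N - (d + 1) + 1 = N - d := by omega
    have : NeZero (m (N - (d + 1))) := ⟨by have := hm (N - (d + 1)); omega⟩
    have e : ∀ M, ∫ t in cyl m (N - (d + 1)) x, f M t * (starRingEnd ℂ) (psi m i t) ∂μ =
        ∑ a : ZMod (m (N - (d + 1))), ∫ t in cyl m (N - d) (Function.update x (N - (d + 1)) a),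
          f M t * (starRingEnd ℂ) (psi m i t) ∂μ := by
      intro M
      rw [cyl_children, integral_biUnion_finset]
      · simp only [hs]
      · intro a _; exact measurableSet_cyl _ _
      · intro a _ b _ hab; exact children_disj _ x (Set.mem_univ a) (Set.mem_univ b) hab
      · intro a _; exact (integrable_mul_psi hm (hf.1 M) i).integrableOn
    rw [e, e]
    exact Finset.sum_congr rfl (fun a _ => ih (by omega) _)

lemma mcoef_eq (hm : ∀ n, 2 ≤ m n) {f : ℕ → G m → ℂ} (hf : IsMartingale m μ f) {i N : ℕ}
    (hi : i < MM m N) : mcoef m μ f i = fcoef m μ (f N) i := by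
  have h0 : ∀ x : G m, cyl m 0 x = Set.univ := by intro x; ext t; simp [cyl]
  have hk : ∀ k, N ≤ k → fcoef m μ (f k) i = fcoef m μ (f N) i := by
    intro k hk
    induction k, hk using Nat.le_induction with
    | base => rfl
    | succ k h ih =>
      rw [← ih]
      have := coef_step hm hf (lt_of_lt_of_le hi (MM_mono hm h)) k le_rfl 0
      unfold fcoef
      simpa [h0] using this
  unfold mcoef
  apply Tendsto.limUnder_eq
  apply tendsto_const_nhds.congr'
  filter_upwards [eventually_ge_atTop N] with k h
  exact (hk k h).symm

lemma mCes_eq (hm : ∀ n, 2 ≤ m n) {α : ℝ} {f : ℕ → G m → ℂ} (hf : IsMartingale m μ f) {k N : ℕ}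
    (hk : k ≤ MM m N) (x : G m) : mCes m α μ f k x = sg m α μ k (f N) x := by
  rw [sg_eq hm (hf.1 N), mCes]
  congr 1
  apply Finset.sum_congr rfl
  intro j hj
  have := (Finset.mem_Icc.mp hj).2
  congr 1
  unfold mS fS
  apply Finset.sum_congr rfl
  intro i hi
  have := Finset.mem_range.mp hi
  rw [mcoef_eq hm hf (by omega : i < MM m N)]

end mart

section tree

variable {m : ℕ → ℕ} {μ : Measure (G m)} [IsProbabilityMeasure μ]

/-- The weight `(2 f*)^p - λ^p`. -/
def Psi (m : ℕ → ℕ) (p : ℝ) (f : ℕ → G m → ℂ) (lam : ℝ) (x : G m) : ℝ≥0∞ :=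
  (2 * ⨆ n, (‖f n x‖₊ : ℝ≥0∞)) ^ p - (ENNReal.ofReal lam) ^ p

/-- The conclusion of the tree induction. -/
def Good (m : ℕ → ℕ) (α : ℝ) (μ : Measure (G m)) (p : ℝ) (R : ℕ) (f : ℕ → G m → ℂ) (N : ℕ)
    (C : ℝ≥0∞) (j : ℕ) (x0 : G m) (lam : ℝ) : Prop :=
  ∃ h : G m → ℂ, Integrable h μ ∧ (∀ t, t ∉ cyl m j x0 → h t = 0) ∧ (∀ t, ‖h t‖ ≤ lam) ∧
    ∫ t, h t ∂μ = ∫ t in cyl m j x0, f N t ∂μ ∧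
    TT m α μ p R ((cyl m j x0).indicator (f N) - h) ≤ C * ∫⁻ t in cyl m j x0, Psi m p f lam t ∂μ

lemma Psi_mono {p : ℝ} (hp0 : 0 < p) (f : ℕ → G m → ℂ) {a b : ℝ} (h : a ≤ b) (x : G m) :
    Psi m p f b x ≤ Psi m p f a x :=
  tsub_le_tsub_left (ENNReal.rpow_le_rpow (ENNReal.ofReal_le_ofReal h) hp0.le) _

lemma Psi_gain {p : ℝ} (hp0 : 0 < p) (f : ℕ → G m → ℂ) {lam : ℝ} (hl : 0 < lam) (x : G m)
    (n : ℕ) (hx : lam ≤ ‖f n x‖) :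
    Psi m p f (2 * lam) x + (2 ^ p - 1) * ENNReal.ofReal lam ^ p ≤ Psi m p f lam x := by
  unfold Psi
  have h2 : ENNReal.ofReal (2 * lam) = 2 * ENNReal.ofReal lam := by
    rw [ENNReal.ofReal_mul (by norm_num)]; simp
  have hL : ENNReal.ofReal lam ≤ ⨆ n, (‖f n x‖₊ : ℝ≥0∞) := by
    refine le_trans ?_ (le_iSup (fun n => (‖f n x‖₊ : ℝ≥0∞)) n)
    rw [← enorm_eq_nnnorm, ← ofReal_norm]
    exact ENNReal.ofReal_le_ofReal hx
  have e1 : (2 ^ p - 1) * ENNReal.ofReal lam ^ p =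
      (2 * ENNReal.ofReal lam) ^ p - ENNReal.ofReal lam ^ p := by
    rw [ENNReal.sub_mul, one_mul, ENNReal.mul_rpow_of_nonneg _ _ hp0.le]
    intro _ _
    exact ENNReal.rpow_ne_top_of_nonneg hp0.le ENNReal.ofReal_ne_top
  rw [h2, e1, tsub_add_tsub_cancel]
  · exact ENNReal.rpow_le_rpow (by gcongr) hp0.le
  · refine ENNReal.rpow_le_rpow ?_ hp0.le
    rw [two_mul]; exact le_self_add

lemma good_children (hm : ∀ n, 2 ≤ m n) {α p : ℝ} (hp0 : 0 < p) (hp1 : p < 1) (R : ℕ)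
    {f : ℕ → G m → ℂ} (hf : IsMartingale m μ f) (N : ℕ) (C : ℝ≥0∞) (j : ℕ) (x0 : G m) (lam : ℝ)
    (hl : 0 < lam)
    (hch : ∀ a : ZMod (m j), Good m α μ p R f N C (j + 1) (Function.update x0 j a) lam) :
    Good m α μ p R f N C j x0 lam := by
  classical
  have : NeZero (m j) := ⟨by have := hm j; omega⟩
  choose h h1 h2 h3 h4 h5 using hch
  have hdis : ((Finset.univ : Finset (ZMod (m j))) : Set (ZMod (m j))).PairwiseDisjoint
      (fun a => cyl m (j + 1) (Function.update x0 j a)) := by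
    intro a _ b _ hab
    exact children_disj j x0 (Set.mem_univ a) (Set.mem_univ b) hab
  have hsub : ∀ t, t ∉ cyl m j x0 → ∀ a, t ∉ cyl m (j + 1) (Function.update x0 j a) := by
    intro t ht a hta
    apply ht
    rw [cyl_children]
    exact Set.mem_biUnion (Finset.mem_coe.mpr (Finset.mem_univ a)) hta
  have hone : ∀ t b, t ∈ cyl m (j + 1) (Function.update x0 j b) → ∀ a, a ≠ b →
      t ∉ cyl m (j + 1) (Function.update x0 j a) := by
    intro t b hb a hab hta
    exact Set.disjoint_left.mp (children_disj j x0 (Set.mem_univ a) (Set.mem_univ b) hab) hta hb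
  have hmem : ∀ t ∈ cyl m j x0, ∃ b, t ∈ cyl m (j + 1) (Function.update x0 j b) := by
    intro t ht
    rw [cyl_children] at ht
    simpa using ht
  refine ⟨∑ a, h a, integrable_finsetSum' _ (fun a _ => h1 a), ?_, ?_, ?_, ?_⟩
  · intro t ht
    rw [Finset.sum_apply]
    exact Finset.sum_eq_zero (fun a _ => h2 a t (hsub t ht a))
  · intro t
    rw [Finset.sum_apply]
    by_cases ht : t ∈ cyl m j x0
    · obtain ⟨b, hb⟩ := hmem t ht
      rw [Finset.sum_eq_single b (fun a _ hab => h2 a t (hone t b hb a hab)) (by simp)]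
      exact h3 b t
    · rw [Finset.sum_eq_zero (fun a _ => h2 a t (hsub t ht a))]
      simpa using hl.le
  · simp only [Finset.sum_apply]
    rw [integral_finsetSum _ (fun a _ => h1 a), cyl_children, integral_biUnion_finset]
    · exact Finset.sum_congr rfl (fun a _ => h4 a)
    · intro a _; exact measurableSet_cyl _ _
    · exact hdis
    · intro a _; exact (hf.1 N).integrableOn
  · have e : (cyl m j x0).indicator (f N) - ∑ a, h a =
        ∑ a, ((cyl m (j + 1) (Function.update x0 j a)).indicator (f N) - h a) := by
      rw [Finset.sum_sub_distrib]
      congr 1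
      funext t
      rw [Finset.sum_apply]
      by_cases ht : t ∈ cyl m j x0
      · obtain ⟨b, hb⟩ := hmem t ht
        rw [Finset.sum_eq_single b (fun a _ hab => Set.indicator_of_notMem (hone t b hb a hab) _)
          (by simp), Set.indicator_of_mem ht, Set.indicator_of_mem hb]
      · rw [Set.indicator_of_notMem ht,
          Finset.sum_eq_zero (fun a _ => Set.indicator_of_notMem (hsub t ht a) _)]
    rw [e]
    refine (TT_sum hm hp0 hp1 R _ _ (fun a =>
      ((hf.1 N).indicator (measurableSet_cyl _ _)).sub (h1 a))).trans ?_
    refine (Finset.sum_le_sum (fun a _ => h5 a)).trans ?_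
    rw [← Finset.mul_sum, cyl_children j x0, lintegral_biUnion_finset hdis
      (fun a _ => measurableSet_cyl _ _)]

lemma good_up (hm : ∀ n, 2 ≤ m n) {B : ℕ} (hB : ∀ n, m n ≤ B)
    (hμ : ∀ (n : ℕ) (x : G m), μ (cyl m n x) = ((MM m n : ℝ≥0∞))⁻¹)
    {α p : ℝ} (hp0 : 0 < p) (hp1 : p < 1) (R : ℕ)
    {f : ℕ → G m → ℂ} (hf : IsMartingale m μ f) (N : ℕ) (A C : ℝ≥0∞)
    (hA : ∀ (j : ℕ) (x0 : G m) (b : G m → ℂ) (lam : ℝ), (∀ t, ‖b t‖ ≤ lam) →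
      (∀ t, t ∉ cyl m j x0 → b t = 0) → ∫ t, b t ∂μ = 0 →
      TT m α μ p R b ≤ A * ENNReal.ofReal lam ^ p * μ (cyl m j x0))
    (hC : A * 3 ^ p * B ≤ C * (2 ^ p - 1))
    (j : ℕ) (hjN : j ≤ N) (x0 : G m) (lam : ℝ) (hl : 0 < lam) (hfj : ‖f j x0‖ ≤ lam)
    (a : ZMod (m j)) (ha : lam < ‖f (j + 1) (Function.update x0 j a)‖)
    (hG : Good m α μ p R f N C j x0 (2 * lam)) : Good m α μ p R f N C j x0 lam := by
  obtain ⟨h, h1, h2, h3, h4, h5⟩ := hG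
  set I := cyl m j x0 with hI
  set J := cyl m (j + 1) (Function.update x0 j a) with hJ
  have hIm : MeasurableSet I := measurableSet_cyl _ _
  have hJm : MeasurableSet J := measurableSet_cyl _ _
  have hJI : J ⊆ I := by
    intro t ht i hi
    have := ht i (by omega)
    rwa [Function.update_of_ne (by omega)] at this
  have hci : Integrable (I.indicator (fun _ => f j x0)) μ := (integrable_const _).indicator hIm
  have hcint : ∫ t, I.indicator (fun _ => f j x0) t ∂μ = ∫ t in I, f N t ∂μ := by
    rw [integral_indicator hIm, hI, cyl_integral hf hjN]
    apply setIntegral_congr_fun hIm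
    intro t ht
    exact (filt_const (hf.2.1 j) ht).symm
  have hcn : ∀ t, ‖I.indicator (fun _ => f j x0) t‖ ≤ lam := by
    intro t
    refine (norm_indicator_le_norm_self _ _).trans hfj
  refine ⟨I.indicator (fun _ => f j x0), hci, fun t ht => Set.indicator_of_notMem ht _,
    hcn, hcint, ?_⟩
  have e : I.indicator (f N) - I.indicator (fun _ => f j x0) =
      (I.indicator (f N) - h) + (h - I.indicator (fun _ => f j x0)) := by abel
  rw [e]
  refine (TT_add hm hp0 hp1 R (((hf.1 N).indicator hIm).sub h1) (h1.sub hci)).trans ?_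
  have hat := hA j x0 (h - I.indicator (fun _ => f j x0)) (3 * lam)
    (by
      intro t
      rw [Pi.sub_apply]
      refine (norm_sub_le _ _).trans ?_
      linarith [h3 t, hcn t])
    (by
      intro t ht
      rw [Pi.sub_apply, h2 t ht, Set.indicator_of_notMem ht, sub_zero])
    (by
      simp only [Pi.sub_apply]
      rw [integral_sub h1 hci, h4, hcint, sub_self])
  have hmu : μ (cyl m j x0) ≤ B * μ J := by
    rw [hJ, hμ, hμ, MM]
    have hB' : ((m j : ℕ) : ℝ≥0∞) ≤ B := by exact_mod_cast hB j
    have hmj0 : ((m j : ℕ) : ℝ≥0∞) ≠ 0 := by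
      have := hm j
      exact_mod_cast (by omega : m j ≠ 0)
    have : ((MM m j : ℕ) : ℝ≥0∞)⁻¹ = (m j : ℝ≥0∞) * ((m j * MM m j : ℕ) : ℝ≥0∞)⁻¹ := by
      push_cast
      rw [ENNReal.mul_inv (Or.inl hmj0) (Or.inl (ENNReal.natCast_ne_top _)), ← mul_assoc,
        ENNReal.mul_inv_cancel hmj0 (ENNReal.natCast_ne_top _), one_mul]
    rw [this]
    gcongr
  have h3l : ENNReal.ofReal (3 * lam) ^ p = 3 ^ p * ENNReal.ofReal lam ^ p := by
    rw [ENNReal.ofReal_mul (by norm_num), ENNReal.mul_rpow_of_nonneg _ _ hp0.le]; simp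
  have hpt : ∫⁻ t in I, Psi m p f (2 * lam) t ∂μ + (2 ^ p - 1) * ENNReal.ofReal lam ^ p * μ J ≤
      ∫⁻ t in I, Psi m p f lam t ∂μ := by
    have e2 : (2 ^ p - 1) * ENNReal.ofReal lam ^ p * μ J =
        ∫⁻ t in I, J.indicator (fun _ => (2 ^ p - 1) * ENNReal.ofReal lam ^ p) t ∂μ := by
      rw [lintegral_indicator hJm, Measure.restrict_restrict hJm,
        Set.inter_eq_self_of_subset_left hJI]
      simp
    rw [e2, ← lintegral_add_right _ (measurable_const.indicator hJm)]
    apply lintegral_mono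
    intro t
    by_cases ht : t ∈ J
    · simp only [Set.indicator_of_mem ht]
      apply Psi_gain hp0 f hl t (j + 1)
      rw [filt_const (hf.2.1 (j + 1)) ht]
      exact ha.le
    · simp only [Set.indicator_of_notMem ht, add_zero]
      exact Psi_mono hp0 f (by linarith) t
  calc _ ≤ C * ∫⁻ t in I, Psi m p f (2 * lam) t ∂μ +
        A * (3 ^ p * ENNReal.ofReal lam ^ p) * (B * μ J) := by
        refine add_le_add h5 (hat.trans ?_)
        rw [h3l]
        gcongr
    _ = C * ∫⁻ t in I, Psi m p f (2 * lam) t ∂μ +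
        (A * 3 ^ p * B) * (ENNReal.ofReal lam ^ p * μ J) := by ring
    _ ≤ C * ∫⁻ t in I, Psi m p f (2 * lam) t ∂μ +
        (C * (2 ^ p - 1)) * (ENNReal.ofReal lam ^ p * μ J) := by gcongr
    _ = C * (∫⁻ t in I, Psi m p f (2 * lam) t ∂μ +
        (2 ^ p - 1) * ENNReal.ofReal lam ^ p * μ J) := by ring
    _ ≤ _ := by gcongr

lemma good_all (hm : ∀ n, 2 ≤ m n) {B : ℕ} (hB : ∀ n, m n ≤ B)
    (hμ : ∀ (n : ℕ) (x : G m), μ (cyl m n x) = ((MM m n : ℝ≥0∞))⁻¹)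
    {α p : ℝ} (hp0 : 0 < p) (hp1 : p < 1) (R : ℕ)
    {f : ℕ → G m → ℂ} (hf : IsMartingale m μ f) (N : ℕ) (A C : ℝ≥0∞)
    (hA : ∀ (j : ℕ) (x0 : G m) (b : G m → ℂ) (lam : ℝ), (∀ t, ‖b t‖ ≤ lam) →
      (∀ t, t ∉ cyl m j x0 → b t = 0) → ∫ t, b t ∂μ = 0 →
      TT m α μ p R b ≤ A * ENNReal.ofReal lam ^ p * μ (cyl m j x0))
    (hC : A * 3 ^ p * B ≤ C * (2 ^ p - 1)) (d : ℕ) :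
    ∀ j, j + d = N → ∀ (x0 : G m) (lam : ℝ), 0 < lam → ‖f j x0‖ ≤ lam →
      Good m α μ p R f N C j x0 lam := by
  induction d with
  | zero =>
    intro j hj x0 lam hl hfl
    have hj' : j = N := by omega
    subst hj'
    have hIm : MeasurableSet (cyl m j x0) := measurableSet_cyl _ _
    refine ⟨(cyl m j x0).indicator (f j), (hf.1 j).indicator hIm,
      fun t ht => Set.indicator_of_notMem ht _, ?_, integral_indicator hIm, ?_⟩
    · intro t
      by_cases ht : t ∈ cyl m j x0
      · rw [Set.indicator_of_mem ht, filt_const (hf.2.1 j) ht]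
        exact hfl
      · rw [Set.indicator_of_notMem ht]
        simpa using hl.le
    · rw [sub_self, TT_zero hp0]
      exact zero_le
  | succ d ih =>
    intro j hj x0
    have hne : NeZero (m j) := ⟨by have := hm j; omega⟩
    have hr : ∀ (r : ℕ) (lam : ℝ), 0 < lam → ‖f j x0‖ ≤ lam →
        (∀ a : ZMod (m j), ‖f (j + 1) (Function.update x0 j a)‖ ≤ 2 ^ r * lam) →
        Good m α μ p R f N C j x0 lam := by
      intro r
      induction r with
      | zero =>
        intro lam hl _ hch
        refine good_children hm hp0 hp1 R hf N C j x0 lam hl (fun a => ?_)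
        exact ih (j + 1) (by omega) _ lam hl (by simpa using hch a)
      | succ r ihr =>
        intro lam hl hfl hch
        by_cases hall : ∀ a : ZMod (m j), ‖f (j + 1) (Function.update x0 j a)‖ ≤ lam
        · refine good_children hm hp0 hp1 R hf N C j x0 lam hl (fun a => ?_)
          exact ih (j + 1) (by omega) _ lam hl (hall a)
        · push Not at hall
          obtain ⟨a, ha⟩ := hall
          refine good_up hm hB hμ hp0 hp1 R hf N A C hA hC j (by omega) x0 lam hl hfl a ha ?_
          refine ihr (2 * lam) (by linarith) (by linarith) (fun b => (hch b).trans ?_)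
          rw [pow_succ]
          linarith
    intro lam hl hfl
    obtain ⟨K, hK⟩ : ∃ K : ℝ, ∀ a : ZMod (m j), ‖f (j + 1) (Function.update x0 j a)‖ ≤ K := by
      refine ⟨∑ a : ZMod (m j), ‖f (j + 1) (Function.update x0 j a)‖, fun a => ?_⟩
      exact Finset.single_le_sum (f := fun a => ‖f (j + 1) (Function.update x0 j a)‖)
        (fun b _ => norm_nonneg _) (Finset.mem_univ a)
    obtain ⟨r, hr2⟩ := pow_unbounded_of_one_lt (K / lam) (one_lt_two : (1 : ℝ) < 2)
    refine hr r lam hl hfl (fun a => (hK a).trans ?_)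
    rw [div_lt_iff₀ hl] at hr2
    exact hr2.le

end tree

section final

variable {m : ℕ → ℕ} {μ : Measure (G m)} [IsProbabilityMeasure μ]

lemma C5_nonneg {α p : ℝ} (hα0 : 0 < α) (hα1 : α < 1) (hp0 : 0 < p) (hp1 : p < 1) (B : ℕ) :
    0 ≤ C5 α p B := by
  have hCg1 := Cg_ge_one (show 0 < 1 - α by linarith)
  have hCg2 := Cg_ge_one hα0
  have hCgp := Cg_ge_one hp0
  have hC1 : 0 ≤ C1 α B := by unfold C1; positivity
  have : 0 < 1 - p := by linarith
  unfold C5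
  positivity

lemma TT_atom2 {α : ℝ} (hα0 : 0 < α) (hα1 : α < 1) (hm : ∀ n, 2 ≤ m n) {B : ℕ}
    (hB : ∀ n, m n ≤ B) (hμ : ∀ (n : ℕ) (x : G m), μ (cyl m n x) = ((MM m n : ℝ≥0∞))⁻¹)
    {p : ℝ} (hp0 : 0 < p) (hp1 : p < 1) (hαp : α * p = 1 - p)
    {N R : ℕ} (hR : 2 ≤ R) (x0 : G m) (b : G m → ℂ) (lam : ℝ)
    (hb : ∀ t, ‖b t‖ ≤ lam) (hb0 : ∀ t, t ∉ cyl m N x0 → b t = 0)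
    (hbi : ∫ t, b t ∂μ = 0 ∨ N = 0) :
    TT m α μ p R b ≤ ENNReal.ofReal (C5 α p B * Real.log R) * ENNReal.ofReal lam ^ p *
      μ (cyl m N x0) := by
  have hlam : 0 ≤ lam := (norm_nonneg _).trans (hb x0)
  have hlog : 0 ≤ Real.log R := Real.log_natCast_nonneg R
  have h5 := C5_nonneg hα0 hα1 hp0 hp1 B
  refine (TT_atom hα0 hα1 hm hB hμ hp0 hp1 hαp hR x0 b lam hb hb0 hbi).trans (le_of_eq ?_)
  rw [ENNReal.ofReal_mul (by positivity), ENNReal.ofReal_mul (by positivity),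
    ENNReal.ofReal_rpow_of_nonneg hlam hp0.le, hμ, ENNReal.ofReal_inv_of_pos (MM_posR hm N),
    ENNReal.ofReal_natCast]

lemma TT_main {α : ℝ} (hα0 : 0 < α) (hα1 : α < 1) (hm : ∀ n, 2 ≤ m n) {B : ℕ}
    (hB : ∀ n, m n ≤ B) (hμ : ∀ (n : ℕ) (x : G m), μ (cyl m n x) = ((MM m n : ℝ≥0∞))⁻¹)
    {p : ℝ} (hp0 : 0 < p) (hp1 : p < 1) (hαp : α * p = 1 - p)
    {R : ℕ} (hR : 2 ≤ R) {f : ℕ → G m → ℂ} (hf : IsMartingale m μ f)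
    (hH : ∫⁻ x, (⨆ j : ℕ, (‖f j x‖₊ : ℝ≥0∞)) ^ p ∂μ ≠ ⊤) (N : ℕ) :
    TT m α μ p R (f N) ≤ ENNReal.ofReal (C5 α p B * Real.log R) *
      ((3 ^ p * B / (2 ^ p - 1)) * 2 ^ p + 1) *
      ∫⁻ x, (⨆ j : ℕ, (‖f j x‖₊ : ℝ≥0∞)) ^ p ∂μ := by
  set H := ∫⁻ x, (⨆ j : ℕ, (‖f j x‖₊ : ℝ≥0∞)) ^ p ∂μ with hHdef
  set A := ENNReal.ofReal (C5 α p B * Real.log R) with hAdef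
  set q : ℝ≥0∞ := 3 ^ p * B / (2 ^ p - 1) with hq
  have h2p : (2 : ℝ≥0∞) ^ p ≠ ⊤ := ENNReal.rpow_ne_top_of_nonneg hp0.le (by simp)
  have h1lt : (1 : ℝ≥0∞) < 2 ^ p := ENNReal.one_lt_rpow (by norm_num) hp0
  have hne : (2 : ℝ≥0∞) ^ p - 1 ≠ 0 := by
    rw [Ne, tsub_eq_zero_iff_le, not_le]; exact h1lt
  have hnt : (2 : ℝ≥0∞) ^ p - 1 ≠ ⊤ := ENNReal.sub_ne_top h2p
  have hC : A * 3 ^ p * B ≤ (A * q) * (2 ^ p - 1) := by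
    rw [mul_assoc A q, hq, ENNReal.div_mul_cancel hne hnt, mul_assoc]
  have hcyl0 : cyl m 0 (0 : G m) = Set.univ := by ext t; simp [cyl]
  have hf0 : ENNReal.ofReal ‖f 0 0‖ ^ p ≤ H := by
    have : ∫⁻ _x : G m, ENNReal.ofReal ‖f 0 0‖ ^ p ∂μ = ENNReal.ofReal ‖f 0 0‖ ^ p := by simp
    rw [← this]
    apply lintegral_mono
    intro x
    apply ENNReal.rpow_le_rpow _ hp0.le
    refine le_trans ?_ (le_iSup (fun n => (‖f n x‖₊ : ℝ≥0∞)) 0)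
    rw [ofReal_norm, filt_const (hf.2.1 0) (x := 0) (y := x) (by simp)]
    rfl
  have key : ∀ ε : ℝ, 0 < ε → TT m α μ p R (f N) ≤
      A * q * (2 ^ p * H) + A * (H + ENNReal.ofReal ε) := by
    intro ε hε
    set v := H.toReal + ε with hv
    have hv0 : 0 < v := by have : 0 ≤ H.toReal := ENNReal.toReal_nonneg; linarith
    set lam := v ^ (1 / p) with hlam
    have hl0 : 0 < lam := Real.rpow_pos_of_pos hv0 _
    have hlp : ENNReal.ofReal lam ^ p = H + ENNReal.ofReal ε := by
      rw [ENNReal.ofReal_rpow_of_nonneg hl0.le hp0.le, hlam, ← Real.rpow_mul hv0.le,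
        one_div_mul_cancel hp0.ne', Real.rpow_one, hv,
        ENNReal.ofReal_add ENNReal.toReal_nonneg hε.le, ENNReal.ofReal_toReal hH]
    have hfl : ‖f 0 0‖ ≤ lam := by
      have h1 : ENNReal.ofReal ‖f 0 0‖ ^ p ≤ ENNReal.ofReal lam ^ p := by
        rw [hlp]; exact hf0.trans le_self_add
      have h2 := (ENNReal.rpow_le_rpow_iff hp0).mp h1
      exact (ENNReal.ofReal_le_ofReal_iff hl0.le).mp h2
    obtain ⟨h, h1, h2, h3, h4, h5⟩ := good_all hm hB hμ hp0 hp1 R hf N A (A * q)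
      (fun j x0 b lam hb hb0 hbi => TT_atom2 hα0 hα1 hm hB hμ hp0 hp1 hαp hR x0 b lam hb hb0
        (Or.inl hbi)) hC N 0 (by omega) 0 lam hl0 hfl
    rw [hcyl0, Set.indicator_univ, Measure.restrict_univ] at h5
    have h6 := TT_atom2 hα0 hα1 hm hB hμ hp0 hp1 hαp hR (N := 0) 0 h lam h3 h2 (Or.inr rfl)
    rw [hcyl0, measure_univ, mul_one, hlp] at h6
    have e : f N = (f N - h) + h := by abel
    rw [e]
    refine (TT_add hm hp0 hp1 R ((hf.1 N).sub h1) h1).trans (add_le_add (h5.trans ?_) h6)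
    gcongr
    rw [hHdef, ← lintegral_const_mul' _ _ h2p]
    apply lintegral_mono
    intro x
    unfold Psi
    refine tsub_le_self.trans ?_
    rw [ENNReal.mul_rpow_of_nonneg _ _ hp0.le]
  have hlim : Tendsto (fun ε : ℝ => A * q * (2 ^ p * H) + A * (H + ENNReal.ofReal ε))
      (nhdsWithin 0 (Set.Ioi 0)) (nhds (A * q * (2 ^ p * H) + A * (H + ENNReal.ofReal 0))) := by
    apply Tendsto.mono_left _ nhdsWithin_le_nhds
    apply Tendsto.const_add
    apply ENNReal.Tendsto.const_mul _ (Or.inr ENNReal.ofReal_ne_top)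
    exact (ENNReal.tendsto_ofReal tendsto_id).const_add _
  have hfin := ge_of_tendsto hlim (by
    filter_upwards [self_mem_nhdsWithin] with ε hε
    exact key ε hε)
  refine hfin.trans (le_of_eq ?_)
  rw [ENNReal.ofReal_zero]
  ring

end final


/-- Let `0 < α < 1`. Then there is a constant `c_α` such that for every
martingale `f ∈ H_{1/(1+α)}(G_m)` and every `n ≥ 2`,
`(1/log n) ∑_{k=1}^{n} ‖σ_k^α f‖_{1/(1+α)}^{1/(1+α)} / k ≤ c_α ‖f‖_{H_{1/(1+α)}}^{1/(1+α)}`,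
where `σ_k^α` is the `k`-th `(C,α)` Cesàro mean of the Vilenkin-Fourier series. -/
theorem statement4
    (m : ℕ → ℕ) (hm : ∀ n, 2 ≤ m n) (hmb : ∃ B, ∀ n, m n ≤ B)
    (μ : Measure (G m)) [IsProbabilityMeasure μ]
    (hμ : ∀ (n : ℕ) (x : G m), μ (cyl m n x) = ((MM m n : ℝ≥0∞))⁻¹)
    (α : ℝ) (hα0 : 0 < α) (hα1 : α < 1) :
    ∃ c : ℝ≥0, ∀ f : ℕ → G m → ℂ, IsMartingale m μ f →
      HpNorm m μ (1 / (1 + α)) f < ⊤ → ∀ n : ℕ, 2 ≤ n →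
      (ENNReal.ofReal (Real.log n))⁻¹ *
          ∑ k ∈ Finset.Icc 1 n,
            (∫⁻ x, (‖mCes m α μ f k x‖₊ : ℝ≥0∞) ^ (1 / (1 + α)) ∂μ) / (k : ℝ≥0∞) ≤
        (c : ℝ≥0∞) * ∫⁻ x, (⨆ j : ℕ, (‖f j x‖₊ : ℝ≥0∞)) ^ (1 / (1 + α)) ∂μ := by
  obtain ⟨B, hB⟩ := hmb
  have hp0 : 0 < 1 / (1 + α) := by positivity
  have hp1 : 1 / (1 + α) < 1 := by
    rw [div_lt_one (by linarith)]; linarith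
  have hαp : α * (1 / (1 + α)) = 1 - 1 / (1 + α) := by
    have : 1 + α ≠ 0 := by linarith
    field_simp
    ring
  generalize 1 / (1 + α) = p at hp0 hp1 hαp
  have h2p : (2 : ℝ≥0∞) ^ p ≠ ⊤ := ENNReal.rpow_ne_top_of_nonneg hp0.le (by simp)
  have h3p : (3 : ℝ≥0∞) ^ p ≠ ⊤ := ENNReal.rpow_ne_top_of_nonneg hp0.le (by simp)
  have h1lt : (1 : ℝ≥0∞) < 2 ^ p := ENNReal.one_lt_rpow (by norm_num) hp0
  have hne : (2 : ℝ≥0∞) ^ p - 1 ≠ 0 := by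
    rw [Ne, tsub_eq_zero_iff_le, not_le]; exact h1lt
  set q : ℝ≥0∞ := (3 ^ p * B / (2 ^ p - 1)) * 2 ^ p + 1 with hq
  have hqt : q ≠ ⊤ := by
    refine ENNReal.add_ne_top.mpr ⟨ENNReal.mul_ne_top (ENNReal.div_ne_top
      (ENNReal.mul_ne_top h3p (ENNReal.natCast_ne_top B)) hne) h2p, ENNReal.one_ne_top⟩
  have hct : ENNReal.ofReal (C5 α p B) * q ≠ ⊤ := ENNReal.mul_ne_top ENNReal.ofReal_ne_top hqt
  refine ⟨(ENNReal.ofReal (C5 α p B) * q).toNNReal, ?_⟩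
  intro f hf hH n hn
  rw [ENNReal.coe_toNNReal hct]
  have hHt : ∫⁻ x, (⨆ j : ℕ, (‖f j x‖₊ : ℝ≥0∞)) ^ p ∂μ ≠ ⊤ := by
    intro h
    unfold HpNorm lpNormE at hH
    rw [h, ENNReal.top_rpow_of_pos (by positivity)] at hH
    exact lt_irrefl _ hH
  have hmain := TT_main hα0 hα1 hm hB hμ hp0 hp1 hαp hn hf hHt n
  have hlog : 0 < Real.log n := Real.log_pos (by exact_mod_cast (by omega : 1 < n))
  have hL0 : ENNReal.ofReal (Real.log n) ≠ 0 := by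
    rw [Ne, ENNReal.ofReal_eq_zero, not_le]; exact hlog
  have hsum : ∑ k ∈ Finset.Icc 1 n, (∫⁻ x, (‖mCes m α μ f k x‖₊ : ℝ≥0∞) ^ p ∂μ) / (k : ℝ≥0∞) =
      TT m α μ p n (f n) := by
    unfold TT
    apply Finset.sum_congr rfl
    intro k hk
    have hkn : k ≤ MM m n := (Finset.mem_Icc.mp hk).2.trans (lt_MM hm n).le
    simp only [mCes_eq hm hf hkn]
  rw [hsum]
  calc _ ≤ (ENNReal.ofReal (Real.log n))⁻¹ * (ENNReal.ofReal (C5 α p B * Real.log n) * q *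
        ∫⁻ x, (⨆ j : ℕ, (‖f j x‖₊ : ℝ≥0∞)) ^ p ∂μ) := by gcongr
    _ = ((ENNReal.ofReal (Real.log n))⁻¹ * ENNReal.ofReal (Real.log n)) *
        (ENNReal.ofReal (C5 α p B) * q *
        ∫⁻ x, (⨆ j : ℕ, (‖f j x‖₊ : ℝ≥0∞)) ^ p ∂μ) := by
      rw [ENNReal.ofReal_mul (C5_nonneg hα0 hα1 hp0 hp1 B)]
      ring
    _ = _ := by
      rw [ENNReal.inv_mul_cancel hL0 ENNReal.ofReal_ne_top, one_mul]

end Vilenkin
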